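/- arXiv:1404.5147 — 9 statements merged into one kernel-verified Lean document; each statement's English description precedes it below -/
import Mathlib

section
/- Let p be a prime, let R be a Noetherian integral domain of characteristic p that is integrally closed in its fraction field, and let B be a perfect F_p-algebra that is an integral domain integrally closed in its fraction field, contains R as a subring, and is integral over R. Then the ring of p-typical Witt vectors W(B) is an integral domain that is integrally closed in its fraction field. -/
/-! The key is to work with complete integral closedness. If `B` is a completely integrally closed
perfect domain with fraction field `K`, then an element `x` of `𝕎 K` almost integral over `𝕎 B` has
leading coefficient `x₀` almost integral over `B`, hence in `B`. Writing `x = [x₀] + p y`, the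
element `y` is again almost integral, because `𝕎 K / 𝕎 B` has no `p`-torsion. By induction all
coefficients of `x` lie in `B`. Since `𝕎 K` is a discrete valuation ring, hence completely
integrally closed, so is `𝕎 B`.

To pass from `R` to `B`, take `y` in the fraction field of `B` almost integral over `B`. Its
conjugates over the fraction field of `R` are almost integral over the integral closure of `R`, so
the coefficients of its minimal polynomial are almost integral over `R` and hence lie in `R`. -/

open scoped nonZeroDivisors

/-- `R` is completely integrally closed in the `R`-algebra `A` if every element of `A` that is
almost integral over `R` comes from `R`. Unlike in `IsIntegrallyClosedIn`, the map `R → A` is not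
required to be injective. -/
def IsCompletelyIntegrallyClosedIn (R A : Type*) [CommRing R] [CommRing A] [Algebra R A] : Prop :=
  ∀ ⦃x : A⦄, IsAlmostIntegral R x → x ∈ (algebraMap R A).range

/-- `R` is completely integrally closed if it is so in its total ring of fractions, for which
`FractionRing R` is used as in `IsIntegrallyClosed`. -/
abbrev IsCompletelyIntegrallyClosed (R : Type*) [CommRing R] : Prop :=
  IsCompletelyIntegrallyClosedIn R (FractionRing R)

section CompletelyIntegrallyClosed

variable {R A S : Type*} [CommRing R] [CommRing A] [CommRing S] [Algebra R A] [Algebra R S]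

theorem isAlmostIntegral_map (f : A →ₐ[R] S) {x : A} (hx : IsAlmostIntegral R x) :
    IsAlmostIntegral R (f x) := by
  obtain ⟨r, hr, h⟩ := hx
  refine ⟨r, hr, fun n ↦ ?_⟩
  obtain ⟨a, ha⟩ := h n
  exact ⟨a, by rw [← map_pow, ← map_smul, ← ha, f.commutes]⟩

theorem isAlmostIntegral_tower_top [IsDomain A] [FaithfulSMul R A] [Algebra A S]
    [IsScalarTower R A S] {x : S} (hx : IsAlmostIntegral R x) : IsAlmostIntegral A x := by
  obtain ⟨r, hr, h⟩ := hx
  refine ⟨algebraMap R A r, ?_, fun n ↦ ?_⟩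
  · exact nonZeroDivisors_le_comap_nonZeroDivisors_of_injective _
      (FaithfulSMul.algebraMap_injective R A) hr
  · obtain ⟨a, ha⟩ := h n
    exact ⟨algebraMap R A a, by
      rw [algebraMap_smul, ← ha, ← IsScalarTower.algebraMap_apply]⟩

theorem isAlmostIntegral_algebraMap_iff [Algebra A S] [IsScalarTower R A S] [FaithfulSMul A S]
    {a : A} : IsAlmostIntegral R (algebraMap A S a) ↔ IsAlmostIntegral R a := by
  refine ⟨fun ⟨r, hr, h⟩ ↦ ⟨r, hr, fun n ↦ ?_⟩, isAlmostIntegral_map (IsScalarTower.toAlgHom R A S)⟩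
  obtain ⟨b, hb⟩ := h n
  refine ⟨b, FaithfulSMul.algebraMap_injective A S ?_⟩
  simp [← IsScalarTower.algebraMap_apply, hb, Algebra.smul_def]

namespace IsCompletelyIntegrallyClosedIn

theorem of_injective (f : A →ₐ[R] S) (hf : Function.Injective f)
    (h : IsCompletelyIntegrallyClosedIn R S) : IsCompletelyIntegrallyClosedIn R A := fun x hx ↦ by
  obtain ⟨r, hr⟩ := h (isAlmostIntegral_map f hx)
  exact ⟨r, hf (by rw [f.commutes, hr])⟩

theorem trans [IsDomain A] [FaithfulSMul R A] [Algebra A S] [IsScalarTower R A S] [FaithfulSMul A S]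
    (hRA : IsCompletelyIntegrallyClosedIn R A) (hAS : IsCompletelyIntegrallyClosedIn A S) :
    IsCompletelyIntegrallyClosedIn R S := fun x hx ↦ by
  obtain ⟨a, rfl⟩ := hAS (isAlmostIntegral_tower_top hx)
  obtain ⟨r, rfl⟩ := hRA (isAlmostIntegral_algebraMap_iff.mp hx)
  exact ⟨r, IsScalarTower.algebraMap_apply R A S r⟩

end IsCompletelyIntegrallyClosedIn

theorem IsCompletelyIntegrallyClosed.isIntegrallyClosed (h : IsCompletelyIntegrallyClosed R) :
    IsIntegrallyClosed R :=
  (isIntegrallyClosed_iff (FractionRing R)).mpr fun hx ↦ h hx.isAlmostIntegral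

theorem isCompletelyIntegrallyClosed_of_isNoetherianRing [IsDomain R] [IsNoetherianRing R]
    [IsIntegrallyClosed R] : IsCompletelyIntegrallyClosed R :=
  fun _ hx ↦ IsIntegrallyClosed.isIntegral_iff.mp hx.isIntegral

end CompletelyIntegrallyClosed

section IntegralClosure

open Polynomial

variable {R : Type*} [CommRing R] [IsDomain R]

theorem isAlmostIntegral_iff_exists_isIntegral_smul_pow {A S : Type*} [CommRing A] [IsDomain A]
    [CommRing S] [Algebra R A] [Algebra A S] [Algebra R S] [IsScalarTower R A S] [FaithfulSMul R A]
    [IsIntegralClosure A R S] {x : S} :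
    IsAlmostIntegral A x ↔ ∃ r : R, r ≠ 0 ∧ ∀ n, IsIntegral R (r • x ^ n) := by
  have : Algebra.IsIntegral R A := IsIntegralClosure.isIntegral_algebra R S
  constructor
  · rintro ⟨a, ha, hax⟩
    obtain ⟨b, r, hr, hb⟩ :=
      Algebra.IsAlgebraic.exists_smul_eq_mul R (1 : A) (nonZeroDivisors.ne_zero ha)
    refine ⟨r, hr, fun n ↦ ?_⟩
    obtain ⟨d, hd⟩ := hax n
    have h : r • x ^ n = algebraMap A S (b * d) := by
      rw [map_mul, hd, ← Algebra.smul_def, smul_smul, mul_comm b, ← hb, smul_assoc, one_smul]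
    exact h ▸ (Algebra.IsIntegral.isIntegral (b * d)).algebraMap
  · rintro ⟨r, hr, hrx⟩
    refine ⟨algebraMap R A r, mem_nonZeroDivisors_of_ne_zero (by simpa using hr), fun n ↦ ?_⟩
    rw [algebraMap_smul]
    exact IsIntegralClosure.isIntegral_iff.mp (hrx n)

variable {F K : Type*} [Field F] [Algebra R F] [IsFractionRing R F] [Field K] [Algebra R K]
  [Algebra F K] [IsScalarTower R F K] [Algebra.IsAlgebraic F K]
  (A : Type*) [CommRing A] [IsDomain A] [Algebra R A] [Algebra A K] [IsScalarTower R A K]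
  [FaithfulSMul R A] [IsIntegralClosure A R K]

theorem isAlmostIntegral_integralClosure_of_aeval_minpoly_eq_zero {y : K}
    (hy : IsAlmostIntegral A y) {Ω : Type*} [Field Ω] [IsAlgClosed Ω] [Algebra F Ω] [Algebra R Ω]
    [IsScalarTower R F Ω] {z : Ω} (hz : aeval z (minpoly F y) = 0) :
    IsAlmostIntegral (integralClosure R Ω) z := by
  obtain ⟨r, hr, hry⟩ := (isAlmostIntegral_iff_exists_isIntegral_smul_pow (R := R)).mp hy
  obtain ⟨φ, rfl⟩ : ∃ φ : K →ₐ[F] Ω, φ y = z :=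
    IntermediateField.exists_algHom_of_splits_of_aeval
      (fun s ↦ ⟨Algebra.IsIntegral.isIntegral s, IsAlgClosed.splits _⟩) hz
  have : FaithfulSMul R Ω := FaithfulSMul.trans R F Ω
  refine (isAlmostIntegral_iff_exists_isIntegral_smul_pow (R := R)).mpr ⟨r, hr, fun n ↦ ?_⟩
  simpa using (hry n).map (φ.restrictScalars R)

theorem isAlmostIntegral_coeff_minpoly [IsIntegrallyClosed R] {y : K} (hy : IsAlmostIntegral A y)
    (i : ℕ) : IsAlmostIntegral R ((minpoly F y).coeff i) := by
  let Ω := AlgebraicClosure F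
  have : FaithfulSMul R Ω := FaithfulSMul.trans R F Ω
  let T := completeIntegralClosure (integralClosure R Ω) Ω
  have roots_mem : ∀ z ∈ ((minpoly F y).map (algebraMap F Ω)).roots, z ∈ T.val.toRingHom.range :=
    fun z hz ↦ ⟨⟨z, isAlmostIntegral_integralClosure_of_aeval_minpoly_eq_zero A hy
      (by simpa using (mem_roots'.mp hz).2)⟩, rfl⟩
  have lifts_T := (IsAlgClosed.splits _).mem_lift_of_roots_mem_range
    ((minpoly.monic (Algebra.IsIntegral.isIntegral y)).map _) T.val.toRingHom roots_mem
  obtain ⟨t, ht⟩ := (lifts_iff_coeff_lifts _).mp lifts_T i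
  have coeff_mem : IsAlmostIntegral (integralClosure R Ω)
      (algebraMap F Ω ((minpoly F y).coeff i)) := by
    rw [← coeff_map, ← ht]
    exact t.2
  obtain ⟨r, hr, hr'⟩ := (isAlmostIntegral_iff_exists_isIntegral_smul_pow (R := R)).mp coeff_mem
  refine (isAlmostIntegral_iff_exists_isIntegral_smul_pow (R := R)).mpr ⟨r, hr, fun n ↦ ?_⟩
  rw [← isIntegral_algebraMap_iff (algebraMap F Ω).injective]
  simpa [Algebra.smul_def, ← IsScalarTower.algebraMap_apply] using hr' n

theorem isCompletelyIntegrallyClosedIn_of_isIntegralClosure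
    (hR : IsCompletelyIntegrallyClosed R) [Algebra (FractionRing R) K]
    [IsScalarTower R (FractionRing R) K] [Algebra.IsAlgebraic (FractionRing R) K] :
    IsCompletelyIntegrallyClosedIn A K := fun y hy ↦ by
  have := hR.isIntegrallyClosed
  have coeff_mem : minpoly (FractionRing R) y ∈ lifts (algebraMap R (FractionRing R)) :=
    (lifts_iff_coeff_lifts _).mpr fun i ↦ hR (isAlmostIntegral_coeff_minpoly A hy i)
  obtain ⟨q, hq, -, hq_monic⟩ := lifts_and_natDegree_eq_and_monic coeff_mem
    (minpoly.monic (Algebra.IsIntegral.isIntegral y))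
  refine (IsIntegralClosure.isIntegral_iff (R := R)).mp ⟨q, hq_monic, ?_⟩
  rw [← aeval_def, ← aeval_map_algebraMap (FractionRing R), hq, minpoly.aeval]

end IntegralClosure

theorem IsCompletelyIntegrallyClosed.of_isIntegral {R B : Type*} [CommRing R] [CommRing B]
    [IsDomain B] [IsIntegrallyClosed B] [Algebra R B] [FaithfulSMul R B] [Algebra.IsIntegral R B]
    (hR : IsCompletelyIntegrallyClosed R) : IsCompletelyIntegrallyClosed B := by
  have : IsDomain R := (FaithfulSMul.algebraMap_injective R B).isDomain _
  have : FaithfulSMul R (FractionRing B) := FaithfulSMul.trans R B _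
  let _ : Algebra (FractionRing R) (FractionRing B) := FractionRing.liftAlgebra R _
  have : Algebra.IsAlgebraic (FractionRing R) (FractionRing B) :=
    isAlgebraic_of_isFractionRing R B ..
  have : IsIntegralClosure B R (FractionRing B) := .of_isIntegrallyClosed B R _
  exact isCompletelyIntegrallyClosedIn_of_isIntegralClosure B hR

theorem perfectRing_of_isFractionRing (p : ℕ) (B K : Type*) [CommRing B] [ExpChar B p]
    [PerfectRing B p] [Field K] [ExpChar K p] [Algebra B K] [IsFractionRing B K] :
    PerfectRing K p := by
  refine .ofSurjective K p fun x ↦ ?_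
  obtain ⟨a, b, -, rfl⟩ := IsFractionRing.div_surjective (A := B) x
  obtain ⟨a, rfl⟩ := surjective_frobenius B p a
  obtain ⟨b, rfl⟩ := surjective_frobenius B p b
  exact ⟨algebraMap B K a / algebraMap B K b, by simp [frobenius_def]⟩

section WittVector

open WittVector

variable {p : ℕ} [Fact p.Prime] {A S : Type*} [CommRing A] [CommRing S]

theorem mem_range_wittVector_map_iff (f : A →+* S) {x : WittVector p S} :
    x ∈ (WittVector.map f).range ↔ ∀ n, x.coeff n ∈ f.range := by
  refine ⟨fun ⟨a, ha⟩ n ↦ ⟨a.coeff n, by rw [← ha, map_coeff]⟩, fun h ↦ ?_⟩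
  choose a ha using h
  exact ⟨.mk p a, by ext n; rw [map_coeff, coeff_mk, ha]⟩

theorem coeff_succ_teichmuller_add_mul_p [CharP S p] (a : S) (y : WittVector p S) (n : ℕ) :
    (teichmuller p a + y * p).coeff (n + 1) = y.coeff n ^ p := by
  have disjoint_support : ∀ k, (teichmuller p a).coeff k = 0 ∨ (y * p).coeff k = 0
    | 0 => .inr (mul_charP_coeff_zero y)
    | k + 1 => .inl (teichmuller_coeff_pos p a _ k.succ_pos)
  rw [coeff_add_of_disjoint _ _ _ disjoint_support, teichmuller_coeff_pos p a _ n.succ_pos,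
    zero_add, mul_charP_coeff_succ]

theorem exists_eq_teichmuller_add_mul_p [CharP S p] [PerfectRing S p] (x : WittVector p S) :
    ∃ y : WittVector p S, x = teichmuller p (x.coeff 0) + y * p := by
  obtain ⟨y, hy⟩ := dvd_sub_sum_teichmuller_iterateFrobeniusEquiv_coeff x 0
  exact ⟨y, by simpa [show Finset.Iic 0 = {0} from rfl, sub_eq_iff_eq_add', mul_comm] using hy⟩

variable [CharP A p] [PerfectRing A p] [CharP S p]

theorem mem_range_wittVector_map_of_mul_p_pow [IsReduced S] (f : A →+* S) {m : ℕ}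
    {x : WittVector p S} (hx : x * p ^ m ∈ (WittVector.map f).range) :
    x ∈ (WittVector.map f).range := by
  rw [mem_range_wittVector_map_iff] at hx ⊢
  intro n
  obtain ⟨a, ha⟩ := hx (n + m)
  obtain ⟨b, rfl⟩ := (bijective_iterateFrobenius A p m).surjective a
  refine ⟨b, iterateFrobenius_inj S p m ?_⟩
  rw [← RingHom.map_iterateFrobenius, ha, mul_pow_charP_coeff_succ, iterateFrobenius_def]

variable [Algebra A S]

/-- The algebra structure on Witt vectors induced by functoriality. It is local because for `A = S`
it agrees with `Algebra.id` only propositionally. -/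
noncomputable local instance wittVectorAlgebra : Algebra (WittVector p A) (WittVector p S) :=
  (WittVector.map (algebraMap A S)).toAlgebra

theorem isAlmostIntegral_of_isAlmostIntegral_mul_p [IsReduced S] {x : WittVector p S}
    (hx : IsAlmostIntegral (WittVector p A) (x * p)) : IsAlmostIntegral (WittVector p A) x := by
  obtain ⟨c, hc, h⟩ := hx
  refine ⟨c, hc, fun n ↦ mem_range_wittVector_map_of_mul_p_pow (algebraMap A S) (m := n) ?_⟩
  rw [smul_mul_assoc, ← mul_pow]
  exact h n

theorem isAlmostIntegral_coeff_zero [IsDomain A] [IsReduced S] {x : WittVector p S}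
    (hx : IsAlmostIntegral (WittVector p A) x) : IsAlmostIntegral A (x.coeff 0) := by
  obtain ⟨c, hc, h⟩ := hx
  obtain ⟨m, u, hu, rfl⟩ := exists_eq_pow_p_mul c (nonZeroDivisors.ne_zero hc)
  refine ⟨u.coeff 0, mem_nonZeroDivisors_of_ne_zero hu, fun n ↦ ?_⟩
  have smul_pow_mem : u • x ^ n ∈ (WittVector.map (algebraMap A S)).range := by
    refine mem_range_wittVector_map_of_mul_p_pow (algebraMap A S) (m := m) ?_
    obtain ⟨d, hd⟩ := h n
    refine ⟨d, hd.trans ?_⟩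
    simp only [Algebra.smul_def, map_mul, map_pow, map_natCast]
    ring
  have coeff_mem := (mem_range_wittVector_map_iff _).mp smul_pow_mem 0
  rwa [Algebra.smul_def, mul_coeff_zero, RingHom.algebraMap_toAlgebra, map_coeff,
    ← constantCoeff_apply (x ^ n), map_pow, ← Algebra.smul_def] at coeff_mem

theorem IsCompletelyIntegrallyClosedIn.wittVector [IsDomain A] [PerfectRing S p]
    (hA : IsCompletelyIntegrallyClosedIn A S) :
    IsCompletelyIntegrallyClosedIn (WittVector p A) (WittVector p S) := by
  have : IsReduced S := (isReduced_iff_pow_one_lt p (Fact.out : p.Prime).one_lt).mpr fun x hx ↦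
    injective_frobenius S p (by rw [frobenius_def, hx, map_zero])
  refine fun x hx ↦ (mem_range_wittVector_map_iff (algebraMap A S)).mpr fun k ↦ ?_
  induction k generalizing x with
  | zero => exact hA (isAlmostIntegral_coeff_zero hx)
  | succ k ih =>
    obtain ⟨a, ha⟩ := hA (isAlmostIntegral_coeff_zero hx)
    obtain ⟨y, hy⟩ := exists_eq_teichmuller_add_mul_p x
    have hyx : y * p = x - algebraMap (WittVector p A) (WittVector p S) (teichmuller p a) := by
      rw [RingHom.algebraMap_toAlgebra, map_teichmuller, ha]
      exact eq_sub_of_add_eq' hy.symm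
    have y_mem : IsAlmostIntegral (WittVector p A) y := by
      refine isAlmostIntegral_of_isAlmostIntegral_mul_p ?_
      rw [hyx]
      exact (completeIntegralClosure _ _).sub_mem hx (Subalgebra.algebraMap_mem _ _)
    rw [hy, coeff_succ_teichmuller_add_mul_p]
    exact pow_mem (ih y y_mem) p

theorem IsCompletelyIntegrallyClosed.wittVector [IsDomain A]
    (hA : IsCompletelyIntegrallyClosed A) : IsCompletelyIntegrallyClosed (WittVector p A) := by
  let K := FractionRing A
  have injective_algebraMap := IsFractionRing.injective A K
  have : CharP K p := charP_of_injective_algebraMap injective_algebraMap p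
  have : PerfectRing K p := perfectRing_of_isFractionRing p A K
  have : FaithfulSMul (WittVector p A) (WittVector p K) :=
    (faithfulSMul_iff_algebraMap_injective _ _).mpr (map_injective _ injective_algebraMap)
  let L := FractionRing (WittVector p K)
  have closedIn_L : IsCompletelyIntegrallyClosedIn (WittVector p A) L :=
    (IsCompletelyIntegrallyClosedIn.wittVector hA).trans
      isCompletelyIntegrallyClosed_of_isNoetherianRing
  have : FaithfulSMul (WittVector p A) L := FaithfulSMul.trans _ (WittVector p K) _
  let φ : FractionRing (WittVector p A) →ₐ[WittVector p A] L :=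
    IsFractionRing.liftAlgHom (g := Algebra.ofId _ L) (FaithfulSMul.algebraMap_injective _ L)
  exact closedIn_L.of_injective φ φ.injective

end WittVector

theorem witt_vectors_integrally_closed_of_integral_over_noetherian_general
    (p : ℕ) [Fact p.Prime] (R : Type*) [CommRing R] (hR : IsCompletelyIntegrallyClosed R)
    (B : Type*) [CommRing B] [IsDomain B] [CharP B p] [PerfectRing B p] [IsIntegrallyClosed B]
    [Algebra R B] (hinj : Function.Injective (algebraMap R B)) [Algebra.IsIntegral R B] :
    IsDomain (WittVector p B) ∧ IsCompletelyIntegrallyClosed (WittVector p B) := by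
  have : FaithfulSMul R B := (faithfulSMul_iff_algebraMap_injective R B).mpr hinj
  exact ⟨inferInstance, hR.of_isIntegral.wittVector⟩

/-- Main Theorem: Let `R` be a Noetherian integrally closed domain of
characteristic `p`, and let `B` be a perfect `𝔽_p`-algebra which is an integrally closed
domain containing `R` as a subring and integral over `R`. Then the ring of `p`-typical Witt
vectors `𝕎 B` is an integrally closed integral domain. -/
theorem witt_vectors_integrally_closed_of_integral_over_noetherian
    (p : ℕ) [Fact p.Prime]
    (R : Type*) [CommRing R] [IsDomain R] [IsNoetherianRing R] [CharP R p]
    [IsIntegrallyClosed R]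
    (B : Type*) [CommRing B] [IsDomain B] [CharP B p] [PerfectRing B p]
    [IsIntegrallyClosed B]
    [Algebra R B] (hinj : Function.Injective (algebraMap R B))
    [Algebra.IsIntegral R B] :
    IsDomain (WittVector p B) ∧ IsIntegrallyClosed (WittVector p B) :=
  (witt_vectors_integrally_closed_of_integral_over_noetherian_general p R
    isCompletelyIntegrallyClosed_of_isNoetherianRing B hinj).imp_right (·.isIntegrallyClosed)
end

section
/- Let p be a prime and let B be a perfect F_p-algebra that is an integral domain and is completely integrally closed. Then the ring of p-typical Witt vectors W(B) is an integral domain that is completely integrally closed (and in particular integrally closed in its fraction field). -/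
/-- An integral domain `A` is completely integrally closed if every element `x` of its fraction
field, for which there is a nonzero `a ∈ A` with `a * xⁿ ∈ A` for all `n ≥ 1`, lies in `A`. -/
def CompletelyIntegrallyClosed (A : Type*) [CommRing A] : Prop :=
  ∀ x : FractionRing A,
    (∃ a : A, a ≠ 0 ∧ ∀ n : ℕ, 1 ≤ n →
      algebraMap A (FractionRing A) a * x ^ n ∈ (algebraMap A (FractionRing A)).range) →
    x ∈ (algebraMap A (FractionRing A)).range

/-!
`W(B)` is `p`-adically complete, `p` is a prime element of it, and `W(B) / p ≅ B`. So it suffices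
to show that a domain `A`, complete for a prime element `π`, is completely integrally closed as soon
as `A / π` is.

If `x = f / g` is almost integral over `A`, with all `a * x ^ n` in `A`, then comparing `π`-adic
multiplicities reduces to the case where `π` divides neither `a` nor `g`. Modulo `π`, `x` is almost
integral over `A / π`, so `x = b₀ + π * x₁` with `b₀` in `A`. Since `π` does not divide `g`, the
elements `a * x₁ ^ n` again lie in `A`, and iterating gives `x = b₀ + π * b₁ + π ^ 2 * b₂ + ⋯`.
-/

theorem completelyIntegrallyClosed_iff_forall_dvd {A : Type*} [CommRing A] :
    CompletelyIntegrallyClosed A ↔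
      ∀ a f g : A, a ≠ 0 → g ∈ nonZeroDivisors A → (∀ n : ℕ, g ^ n ∣ a * f ^ n) → g ∣ f := by
  have mk'_mem_range (f : A) (g : nonZeroDivisors A) :
      IsLocalization.mk' (FractionRing A) f g ∈ (algebraMap A (FractionRing A)).range ↔
        (g : A) ∣ f := by
    simp only [RingHom.mem_range, eq_comm (b := IsLocalization.mk' _ f g),
      IsLocalization.mk'_eq_iff_eq_mul, ← map_mul,
      (IsFractionRing.injective A (FractionRing A)).eq_iff, dvd_def, mul_comm]
  have mul_mk'_pow_mem_range (a f : A) (g : nonZeroDivisors A) (n : ℕ) :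
      algebraMap A (FractionRing A) a * IsLocalization.mk' (FractionRing A) f g ^ n ∈
        (algebraMap A (FractionRing A)).range ↔ (g : A) ^ n ∣ a * f ^ n := by
    rw [← IsLocalization.mk'_pow, IsLocalization.mul_mk'_eq_mk'_of_mul, mk'_mem_range,
      SubmonoidClass.coe_pow]
  constructor
  · intro hA a f g ha hg h
    refine (mk'_mem_range f ⟨g, hg⟩).mp (hA _ ⟨a, ha, fun n _ => ?_⟩)
    exact (mul_mk'_pow_mem_range a f ⟨g, hg⟩ n).mpr (h n)
  · rintro hA x ⟨a, ha, hx⟩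
    obtain ⟨f, g, rfl⟩ := IsLocalization.exists_mk'_eq (nonZeroDivisors A) x
    refine (mk'_mem_range f g).mpr (hA a f g ha g.2 fun n => ?_)
    rcases n.eq_zero_or_pos with rfl | hn
    · simp
    · exact (mul_mk'_pow_mem_range a f g n).mp (hx n hn)

theorem CompletelyIntegrallyClosed.of_ringEquiv {A B : Type*} [CommRing A] [CommRing B]
    (e : A ≃+* B) (hA : CompletelyIntegrallyClosed A) : CompletelyIntegrallyClosed B := by
  rw [completelyIntegrallyClosed_iff_forall_dvd] at hA ⊢
  intro a f g ha hg h
  rw [← map_dvd_iff e.symm]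
  refine hA (e.symm a) _ _ (by simpa using ha) ?_ fun n => ?_
  · rw [← MulEquivClass.map_nonZeroDivisors e.symm]
    exact Submonoid.mem_map_of_mem e.symm hg
  · simpa only [map_mul, map_pow] using map_dvd e.symm (h n)

theorem CompletelyIntegrallyClosed.isIntegrallyClosed {A : Type*} [CommRing A] [Nontrivial A]
    (hA : CompletelyIntegrallyClosed A) : IsIntegrallyClosed A := by
  rw [isIntegrallyClosed_iff (FractionRing A)]
  intro x hx
  obtain ⟨a, ha, h⟩ := hx.isAlmostIntegral
  refine hA x ⟨a, nonZeroDivisors.ne_zero ha, fun n _ => ?_⟩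
  rw [← Algebra.smul_def]
  exact h n

section PrimeElement

variable {M : Type*} [CommMonoidWithZero M] [IsCancelMulZero M] {π : M}

theorem dvd_of_dvd_prime_pow_mul (hπ : Prime π) {g x : M} {m : ℕ} (hg : ¬π ∣ g)
    (h : g ∣ π ^ m * x) : g ∣ x := by
  obtain ⟨c, hc⟩ := h
  obtain ⟨d, rfl⟩ : π ^ m ∣ c := hπ.pow_dvd_of_dvd_mul_left m hg ⟨x, hc.symm⟩
  refine ⟨d, mul_left_cancel₀ (pow_ne_zero m hπ.ne_zero) ?_⟩
  rw [hc, mul_left_comm]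

theorem prime_pow_dvd_of_forall_pow_dvd (hπ : Prime π) {a f g : M} {k : ℕ}
    (ha : FiniteMultiplicity π a) (hg : π ^ k ∣ g) (h : ∀ n : ℕ, g ^ n ∣ a * f ^ n) :
    π ^ k ∣ f := by
  by_contra hkf
  have hf : FiniteMultiplicity π f := by
    by_contra hf
    exact hkf (FiniteMultiplicity.not_iff_forall.mp hf k)
  have hlt : multiplicity π f < k := hf.multiplicity_lt_iff_not_dvd.mpr hkf
  have hle (n : ℕ) : k * n ≤ multiplicity π a + n * multiplicity π f := by
    have hfin : FiniteMultiplicity π (a * f ^ n) := hπ.finiteMultiplicity_mul ha (hf.pow hπ)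
    have hdvd : π ^ (k * n) ∣ a * f ^ n := by
      rw [pow_mul]
      exact (pow_dvd_pow_of_dvd hg n).trans (h n)
    rw [← hf.multiplicity_pow hπ, ← multiplicity_mul hπ hfin]
    exact hfin.le_multiplicity_of_pow_dvd hdvd
  nlinarith [hle (multiplicity π a + 1)]

end PrimeElement

theorem finiteMultiplicity_of_isHausdorff {A : Type*} [CommRing A] {π a : A}
    [IsHausdorff (Ideal.span {π}) A] (ha : a ≠ 0) : FiniteMultiplicity π a := by
  by_contra hfin
  have hdvd : ∀ n : ℕ, π ^ n ∣ a := FiniteMultiplicity.not_iff_forall.mp hfin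
  refine ha (IsHausdorff.haus ‹IsHausdorff (Ideal.span {π}) A› a fun n => ?_)
  simpa [SModEq.zero, Ideal.span_singleton_pow, Ideal.mem_span_singleton] using hdvd n

theorem pow_dvd_mul_sub_mul_pow {A : Type*} [CommRing A] {a f g : A}
    (h : ∀ n : ℕ, g ^ n ∣ a * f ^ n) (b : A) (n : ℕ) : g ^ n ∣ a * (f - g * b) ^ n := by
  rw [sub_eq_add_neg, add_pow, Finset.mul_sum]
  refine Finset.dvd_sum fun i hi => ?_
  have hin : i + (n - i) = n := Nat.add_sub_of_le (Finset.mem_range_succ_iff.mp hi)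
  have hb : g ^ (n - i) ∣ (-(g * b)) ^ (n - i) := pow_dvd_pow_of_dvd ⟨-b, by ring⟩ _
  calc g ^ n = g ^ i * g ^ (n - i) := by rw [← pow_add, hin]
    _ ∣ a * f ^ i * (-(g * b)) ^ (n - i) := mul_dvd_mul (h i) hb
    _ ∣ a * (f ^ i * (-(g * b)) ^ (n - i) * n.choose i) := ⟨n.choose i, by ring⟩

section AdicallyComplete

variable {A : Type*} [CommRing A] [IsDomain A] {π : A}

theorem dvd_of_forall_prime_pow_dvd_sub_mul [IsAdicComplete (Ideal.span {π}) A] (hπ : Prime π)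
    {f g : A} (hg : ¬π ∣ g) (h : ∀ N : ℕ, ∃ b, π ^ N ∣ f - g * b) : g ∣ f := by
  have smodEq_iff (N : ℕ) (x y : A) :
      x ≡ y [SMOD (Ideal.span {π} ^ N • ⊤ : Submodule A A)] ↔ π ^ N ∣ x - y := by
    rw [SModEq.sub_mem, smul_eq_mul, Ideal.mul_top, Ideal.span_singleton_pow,
      Ideal.mem_span_singleton]
  choose b hb using h
  have hcauchy {m n : ℕ} (hmn : m ≤ n) : π ^ m ∣ b m - b n := by
    refine hπ.pow_dvd_of_dvd_mul_left m hg ?_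
    have := dvd_sub ((pow_dvd_pow π hmn).trans (hb n)) (hb m)
    rwa [sub_sub_sub_cancel_left, ← mul_sub] at this
  obtain ⟨c, hc⟩ := IsPrecomplete.prec (I := Ideal.span {π}) inferInstance (f := b)
    fun hmn => (smodEq_iff _ _ _).mpr (hcauchy hmn)
  refine ⟨c, IsHausdorff.eq_iff_smodEq (I := Ideal.span {π}) |>.mpr fun N => ?_⟩
  rw [smodEq_iff, ← sub_add_sub_cancel f (g * b N), ← mul_sub]
  exact dvd_add (hb N) (((smodEq_iff _ _ _).mp (hc N)).mul_left g)

theorem exists_sub_mul_eq_prime_mul (hπ : Prime π)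
    (hquot : CompletelyIntegrallyClosed (A ⧸ Ideal.span {π})) {a f g : A}
    (ha : ¬π ∣ a) (hg : ¬π ∣ g) (h : ∀ n : ℕ, g ^ n ∣ a * f ^ n) :
    ∃ b f', f - g * b = π * f' ∧ ∀ n : ℕ, g ^ n ∣ a * f' ^ n := by
  have : (Ideal.span {π}).IsPrime := (Ideal.span_singleton_prime hπ.ne_zero).mpr hπ
  let mk := Ideal.Quotient.mk (Ideal.span {π})
  have mk_ne_zero {x : A} (hx : ¬π ∣ x) : mk x ≠ 0 := by
    rwa [Ne, Ideal.Quotient.eq_zero_iff_dvd]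
  have hdvd : mk g ∣ mk f := by
    refine completelyIntegrallyClosed_iff_forall_dvd.mp hquot (mk a) _ _ (mk_ne_zero ha)
      (mem_nonZeroDivisors_of_ne_zero (mk_ne_zero hg)) fun n => ?_
    simpa only [map_mul, map_pow] using map_dvd mk (h n)
  obtain ⟨b', hb'⟩ := hdvd
  obtain ⟨b, rfl⟩ := Ideal.Quotient.mk_surjective b'
  obtain ⟨f', hf'⟩ : π ∣ f - g * b := by
    rw [← Ideal.Quotient.eq_zero_iff_dvd, map_sub, map_mul, sub_eq_zero]
    exact hb'
  refine ⟨b, f', hf', fun n => ?_⟩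
  refine dvd_of_dvd_prime_pow_mul (m := n) hπ (fun hgn => hg (hπ.dvd_of_dvd_pow hgn)) ?_
  rw [mul_left_comm, ← mul_pow, ← hf']
  exact pow_dvd_mul_sub_mul_pow h b n

theorem exists_prime_pow_dvd_sub_mul (hπ : Prime π)
    (hquot : CompletelyIntegrallyClosed (A ⧸ Ideal.span {π})) {a f g : A}
    (ha : ¬π ∣ a) (hg : ¬π ∣ g) (h : ∀ n : ℕ, g ^ n ∣ a * f ^ n) (N : ℕ) :
    ∃ b, π ^ N ∣ f - g * b := by
  induction N generalizing f with
  | zero => simp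
  | succ N ih =>
    obtain ⟨b₀, f', hf', h'⟩ := exists_sub_mul_eq_prime_mul hπ hquot ha hg h
    obtain ⟨b, hb⟩ := ih h'
    refine ⟨b₀ + π * b, ?_⟩
    have hsub : f - g * (b₀ + π * b) = π * (f' - g * b) := by linear_combination hf'
    rw [hsub, pow_succ']
    exact mul_dvd_mul_left π hb

theorem CompletelyIntegrallyClosed.of_quotient_span_prime [IsAdicComplete (Ideal.span {π}) A]
    (hπ : Prime π) (hquot : CompletelyIntegrallyClosed (A ⧸ Ideal.span {π})) :
    CompletelyIntegrallyClosed A := by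
  rw [completelyIntegrallyClosed_iff_forall_dvd]
  intro a f g ha hg h
  have ha_fin : FiniteMultiplicity π a := finiteMultiplicity_of_isHausdorff ha
  have hg_fin : FiniteMultiplicity π g :=
    finiteMultiplicity_of_isHausdorff (nonZeroDivisors.ne_zero hg)
  obtain ⟨a', ha, ha'⟩ := ha_fin.exists_eq_pow_mul_and_not_dvd
  obtain ⟨g', hg, hg'⟩ := hg_fin.exists_eq_pow_mul_and_not_dvd
  set m := multiplicity π a
  set k := multiplicity π g
  obtain ⟨f', rfl⟩ : π ^ k ∣ f := prime_pow_dvd_of_forall_pow_dvd hπ ha_fin ⟨g', hg⟩ h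
  have h' (n : ℕ) : g' ^ n ∣ a' * f' ^ n := by
    refine dvd_of_dvd_prime_pow_mul (m := m) hπ (fun hgn => hg' (hπ.dvd_of_dvd_pow hgn)) ?_
    refine (mul_dvd_mul_iff_left (pow_ne_zero n (pow_ne_zero k hπ.ne_zero))).mp ?_
    rw [← mul_pow, ← hg, ← mul_assoc (π ^ m), ← ha, mul_left_comm, ← mul_pow]
    exact h n
  rw [hg]
  refine mul_dvd_mul_left _ (dvd_of_forall_prime_pow_dvd_sub_mul hπ hg' ?_)
  exact exists_prime_pow_dvd_sub_mul hπ hquot ha' hg' h'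

end AdicallyComplete

theorem wittVector_prime_p (p : ℕ) [Fact p.Prime] (B : Type*) [CommRing B] [IsDomain B]
    [CharP B p] [PerfectRing B p] : Prime (p : WittVector p B) := by
  rw [← Ideal.span_singleton_prime (WittVector.p_nonzero p B), ← WittVector.ker_constantCoeff]
  exact RingHom.ker_isPrime _

/-- If `B` is a perfect `𝔽_p`-algebra which is a completely integrally closed
domain, then `𝕎 B` is a completely integrally closed domain (in particular it is integrally
closed in its fraction field). -/
theorem witt_vectors_completely_integrally_closed
    (p : ℕ) [Fact p.Prime] (B : Type*) [CommRing B] [IsDomain B]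
    [CharP B p] [PerfectRing B p]
    (hB : CompletelyIntegrallyClosed B) :
    IsDomain (WittVector p B) ∧ CompletelyIntegrallyClosed (WittVector p B) ∧
      IsIntegrallyClosed (WittVector p B) := by
  have hW : CompletelyIntegrallyClosed (WittVector p B) :=
    .of_quotient_span_prime (wittVector_prime_p p B)
      (.of_ringEquiv WittVector.quotientPEquiv.symm hB)
  exact ⟨inferInstance, hW, hW.isIntegrallyClosed⟩
end

section
/- Let p be a prime and let A be a perfect F_p-algebra. Then the ring of p-typical Witt vectors W(A) is a p-adic deformation of A: p is a nonzerodivisor in W(A), W(A) is p-adically complete and separated (the natural map W(A) → lim_n W(A)/p^n W(A) is an isomorphism), and there is a ring isomorphism W(A)/p·W(A) ≅ A. -/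
theorem isReduced_of_perfectRing {p : ℕ} (hp : 1 < p) (M : Type*) [MonoidWithZero M]
    [PerfectRing M p] : IsReduced M := by
  rw [isReduced_iff_pow_one_lt p hp]
  intro x hx
  have pow_eq : x ^ p = 0 ^ p := by rw [hx, zero_pow (Nat.ne_zero_of_lt hp)]
  exact PerfectRing.bijective_frobenius.injective pow_eq

theorem natCast_prime_mem_nonZeroDivisors_wittVector (p : ℕ) [Fact p.Prime] (A : Type*)
    [CommRing A] [CharP A p] [IsReduced A] :
    (p : WittVector p A) ∈ nonZeroDivisors (WittVector p A) := by
  rw [mem_nonZeroDivisors_iff_right]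
  intro x hx
  ext i
  have coeff_pow_eq_zero : x.coeff i ^ p = 0 := by
    rw [← WittVector.mul_charP_coeff_succ, hx, WittVector.zero_coeff]
  rw [eq_zero_of_pow_eq_zero coeff_pow_eq_zero, WittVector.zero_coeff]

/-- For a perfect `𝔽_p`-algebra `A`, the ring of `p`-typical Witt vectors `𝕎 A`
is a `p`-adic deformation of `A`: `p` is a nonzerodivisor in `𝕎 A`, `𝕎 A` is `p`-adically
complete and separated, and `𝕎 A / p·𝕎 A ≅ A`. -/
theorem witt_vectors_is_p_adic_deformation
    (p : ℕ) [Fact p.Prime] (A : Type*) [CommRing A]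
    [CharP A p] [PerfectRing A p] :
    (p : WittVector p A) ∈ nonZeroDivisors (WittVector p A) ∧
    IsAdicComplete (Ideal.span {(p : WittVector p A)}) (WittVector p A) ∧
    Nonempty ((WittVector p A ⧸ Ideal.span {(p : WittVector p A)}) ≃+* A) := by
  have : IsReduced A := isReduced_of_perfectRing (Fact.out : p.Prime).one_lt A
  exact ⟨natCast_prime_mem_nonZeroDivisors_wittVector p A,
    WittVector.isAdicCompleteIdealSpanP, ⟨WittVector.quotientPEquiv⟩⟩
end

section
/- Let p be a prime and let A be a perfect F_p-algebra. If A₁ and A₂ are two p-adic deformations of A, with given ring isomorphisms f_i : A_i/pA_i ≅ A (i = 1,2), then there exists a ring isomorphism φ : A₁ ≅ A₂ such that the induced map A₁/pA₁ → A₂/pA₂ is compatible with f₁ and f₂ (i.e., f₂ ∘ (φ mod p) = f₁). -/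
/-!
Both deformations are isomorphic to the ring of Witt vectors of `A`. Since `A` is perfect, a map
`A → R ⧸ (p)` factors through the tilt of `R`, and Fontaine's map `θ` turns this factorization into
a ring homomorphism `W(A) → R` lifting the given map modulo `p`. If the given map is bijective,
so is its lift: surjectivity modulo `p` propagates by `p`-adic completeness, and since `p` is a
nonzerodivisor of `R`, an element of the kernel can be divided by `p` inside the kernel, hence is
infinitely divisible by `p` and vanishes.
-/

section Kernel

variable {S R : Type*} [CommRing S] [CommRing R] {e : S →+* R} {a : S}

theorem ker_le_span_singleton_mul_ker (ha : e a ∈ nonZeroDivisors R)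
    (hker : RingHom.ker e ≤ Ideal.span {a}) :
    RingHom.ker e ≤ Ideal.span {a} * RingHom.ker e := by
  intro x hx
  obtain ⟨y, rfl⟩ := Ideal.mem_span_singleton.1 (hker hx)
  rw [RingHom.mem_ker, map_mul, mul_comm, mul_right_mem_nonZeroDivisors_eq_zero_iff ha] at hx
  exact Ideal.mul_mem_mul (Ideal.mem_span_singleton_self a) hx

theorem ker_le_span_singleton_pow (ha : e a ∈ nonZeroDivisors R)
    (hker : RingHom.ker e ≤ Ideal.span {a}) (n : ℕ) :
    RingHom.ker e ≤ Ideal.span {a} ^ n := by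
  induction n with
  | zero => simp
  | succ n ih =>
    calc
      RingHom.ker e ≤ Ideal.span {a} * RingHom.ker e := ker_le_span_singleton_mul_ker ha hker
      _ ≤ Ideal.span {a} * Ideal.span {a} ^ n := Ideal.mul_mono_right ih
      _ = Ideal.span {a} ^ (n + 1) := (pow_succ' _ n).symm

theorem injective_of_ker_le_span_singleton [IsHausdorff (Ideal.span {a}) S]
    (ha : e a ∈ nonZeroDivisors R) (hker : RingHom.ker e ≤ Ideal.span {a}) :
    Function.Injective e := by
  refine (injective_iff_map_eq_zero e).2 fun x hx ↦ IsHausdorff.haus ‹_› x fun n ↦ ?_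
  rw [SModEq.zero, smul_eq_mul, Ideal.mul_top]
  exact ker_le_span_singleton_pow ha hker n hx

end Kernel

section WittVector

variable {p : ℕ} [Fact p.Prime] {A : Type*} [CommRing A] [CharP A p] [PerfectRing A p]
  {R : Type*} [CommRing R]

section Lift

variable [Fact (¬ IsUnit (p : R))] (f : A →+* R ⧸ Ideal.span {(p : R)})

/-- The factorization through the tilt `R♭` of a ring homomorphism `f : A → R ⧸ (p)` from a
perfect ring. -/
noncomputable def preTiltLift : A →+* PreTilt R p :=
  Perfection.lift p A (ModP R p) f

theorem coeff_zero_preTiltLift (x : A) : PreTilt.coeff 0 (preTiltLift f x) = f x :=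
  DFunLike.congr_fun ((Perfection.lift p A (ModP R p)).symm_apply_apply f) x

variable [IsAdicComplete (Ideal.span {(p : R)}) R]

/-- The lift to `R` of a ring homomorphism `f : A → R ⧸ (p)` from a perfect ring: the map
`W(A) → W(R♭)` induced by `preTiltLift f`, followed by Fontaine's map `θ : W(R♭) → R`. -/
noncomputable def wittVectorLift : WittVector p A →+* R :=
  (WittVector.fontaineTheta R p).comp (WittVector.map (preTiltLift f))

theorem mk_wittVectorLift (w : WittVector p A) :
    Ideal.Quotient.mk (Ideal.span {(p : R)}) (wittVectorLift f w) = f (w.coeff 0) := by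
  rw [wittVectorLift, RingHom.comp_apply, WittVector.mk_fontaineTheta, WittVector.map_coeff,
    coeff_zero_preTiltLift]

variable {f}

theorem ker_wittVectorLift_le (hf : Function.Injective f) :
    RingHom.ker (wittVectorLift f) ≤ Ideal.span {(p : WittVector p A)} := by
  intro w hw
  rw [WittVector.mem_span_p_iff_coeff_zero_eq_zero, ← map_eq_zero_iff f hf, ← mk_wittVectorLift,
    RingHom.mem_ker.1 hw, map_zero]

theorem wittVectorLift_injective (hp : (p : R) ∈ nonZeroDivisors R) (hf : Function.Injective f) :
    Function.Injective (wittVectorLift f) :=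
  injective_of_ker_le_span_singleton (by rwa [map_natCast]) (ker_wittVectorLift_le hf)

theorem wittVectorLift_surjective (hf : Function.Surjective f) :
    Function.Surjective (wittVectorLift f) := by
  have map_span_p : (Ideal.span {(p : WittVector p A)}).map (wittVectorLift f) =
      Ideal.span {(p : R)} := by
    rw [Ideal.map_span, Set.image_singleton, map_natCast]
  have : IsHausdorff ((Ideal.span {(p : WittVector p A)}).map (wittVectorLift f)) R := by
    rw [map_span_p]; infer_instance
  refine surjective_of_mk_map_comp_surjective _ (I := Ideal.span {(p : WittVector p A)}) ?_
  rw [map_span_p]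
  convert hf.comp (WittVector.coeff_surjective (p := p) 0) using 1
  exact funext (mk_wittVectorLift f)

end Lift

theorem exists_wittVector_ringEquiv [IsAdicComplete (Ideal.span {(p : R)}) R]
    (hp : (p : R) ∈ nonZeroDivisors R)
    (f : (R ⧸ Ideal.span {(p : R)}) ≃+* A) :
    ∃ e : WittVector p A ≃+* R, ∀ w,
      f (Ideal.Quotient.mk (Ideal.span {(p : R)}) (e w)) = w.coeff 0 := by
  have : Nontrivial A := CharP.nontrivial_of_char_ne_one (Fact.out : p.Prime).ne_one
  have : Fact (¬ IsUnit (p : R)) := ⟨fun hu ↦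
    Ideal.Quotient.nontrivial_iff.1 f.toEquiv.nontrivial (Ideal.span_singleton_eq_top.2 hu)⟩
  let g : A →+* R ⧸ Ideal.span {(p : R)} := f.symm
  refine ⟨.ofBijective (wittVectorLift g) ⟨wittVectorLift_injective hp f.symm.injective,
    wittVectorLift_surjective f.symm.surjective⟩, fun w ↦ ?_⟩
  calc
    f (Ideal.Quotient.mk _ (wittVectorLift g w)) = f (f.symm (w.coeff 0)) :=
      congrArg f (mk_wittVectorLift g w)
    _ = w.coeff 0 := f.apply_symm_apply _

end WittVector

/-- Uniqueness of `p`-adic deformations of a perfect `𝔽_p`-algebra `A`.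
If `A₁` and `A₂` are two `p`-adic deformations of `A`, with given isomorphisms
`fᵢ : Aᵢ/pAᵢ ≃ A`, then there is a ring isomorphism `φ : A₁ ≃ A₂` compatible with
`f₁` and `f₂` modulo `p`. -/
theorem p_adic_deformation_unique
    (p : ℕ) [Fact p.Prime] (A : Type*) [CommRing A] [CharP A p] [PerfectRing A p]
    (A₁ A₂ : Type*) [CommRing A₁] [CommRing A₂]
    (h₁ : (p : A₁) ∈ nonZeroDivisors A₁)
    (h₂ : (p : A₂) ∈ nonZeroDivisors A₂)
    (hc₁ : IsAdicComplete (Ideal.span {(p : A₁)}) A₁)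
    (hc₂ : IsAdicComplete (Ideal.span {(p : A₂)}) A₂)
    (f₁ : (A₁ ⧸ Ideal.span {(p : A₁)}) ≃+* A)
    (f₂ : (A₂ ⧸ Ideal.span {(p : A₂)}) ≃+* A) :
    ∃ φ : A₁ ≃+* A₂, ∀ x : A₁,
      f₂ (Ideal.Quotient.mk (Ideal.span {(p : A₂)}) (φ x)) =
        f₁ (Ideal.Quotient.mk (Ideal.span {(p : A₁)}) x) := by
  obtain ⟨e₁, he₁⟩ := exists_wittVector_ringEquiv h₁ f₁
  obtain ⟨e₂, he₂⟩ := exists_wittVector_ringEquiv h₂ f₂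
  refine ⟨e₁.symm.trans e₂, fun x ↦ ?_⟩
  calc
    f₂ (Ideal.Quotient.mk _ (e₂ (e₁.symm x))) = (e₁.symm x).coeff 0 := he₂ _
    _ = f₁ (Ideal.Quotient.mk _ (e₁ (e₁.symm x))) := (he₁ _).symm
    _ = f₁ (Ideal.Quotient.mk _ x) := by rw [e₁.apply_symm_apply]
end

section
/- Let A be a commutative ring and let x ∈ A be a nonzerodivisor. Then the image of x in the x-adic completion A^∧ = lim_n A/x^n A is a nonzerodivisor in A^∧. -/
/-!
An injective linear map `f : M → N` whose range contains `I ^ k N` satisfies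
`I ^ (n + k) N ⊆ I ^ n f(M) = f(I ^ n M)`. So if `f` kills the limit of a Cauchy sequence `a`,
then `f (a (n + k)) ∈ I ^ (n + k) N` forces `a (n + k) ∈ I ^ n M`, and `a` tends to `0`.
Multiplication by a nonzerodivisor `x` is such a map for `I = (x)` and `k = 1`.
-/

open scoped Pointwise

section

variable {R M N : Type*} [CommRing R] [AddCommGroup M] [Module R M] [AddCommGroup N] [Module R N]
  {I : Ideal R} {f : M →ₗ[R] N}

theorem comap_pow_add_smul_top_le_of_pow_smul_top_le_range (hf : Function.Injective f) {k : ℕ}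
    (hk : I ^ k • (⊤ : Submodule R N) ≤ LinearMap.range f) (n : ℕ) :
    (I ^ (n + k) • (⊤ : Submodule R N)).comap f ≤ I ^ n • ⊤ := by
  have hmap : I ^ (n + k) • (⊤ : Submodule R N) ≤ (I ^ n • (⊤ : Submodule R M)).map f :=
    calc I ^ (n + k) • (⊤ : Submodule R N) = I ^ n • I ^ k • (⊤ : Submodule R N) := by
          rw [pow_add, Submodule.mul_smul]
      _ ≤ I ^ n • LinearMap.range f := smul_mono_right _ hk
      _ = (I ^ n • (⊤ : Submodule R M)).map f := by
          rw [Submodule.map_smul'', Submodule.map_top]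
  exact (Submodule.comap_mono hmap).trans_eq (Submodule.comap_map_eq_of_injective hf _)

theorem adicCompletion_map_injective_of_comap_le
    (h : ∀ n, ∃ m ≥ n, (I ^ m • (⊤ : Submodule R N)).comap f ≤ I ^ n • ⊤) :
    Function.Injective (AdicCompletion.map I f) := by
  rw [injective_iff_map_eq_zero]
  intro y hy
  induction y using AdicCompletion.induction_on with
  | _ a =>
  refine AdicCompletion.mk_zero_of I M a ⟨0, fun n _ ↦ ?_⟩
  obtain ⟨m, hnm, hm⟩ := h n
  have hfa : f (a m) ∈ I ^ m • (⊤ : Submodule R N) :=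
    (Submodule.Quotient.mk_eq_zero _).mp (congrArg (AdicCompletion.eval I N m) hy)
  exact ⟨m, hnm, n, le_rfl, hm hfa⟩

theorem adicCompletion_map_injective_of_pow_smul_top_le_range (hf : Function.Injective f) {k : ℕ}
    (hk : I ^ k • (⊤ : Submodule R N) ≤ LinearMap.range f) :
    Function.Injective (AdicCompletion.map I f) :=
  adicCompletion_map_injective_of_comap_le fun n ↦
    ⟨n + k, n.le_add_right k, comap_pow_add_smul_top_le_of_pow_smul_top_le_range hf hk n⟩

theorem adicCompletion_coe_map_lsmul (x : R) :
    ⇑(AdicCompletion.map I (LinearMap.lsmul R M x)) = (x • ·) :=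
  AdicCompletion.map_ext I fun _ ↦ rfl

theorem regular_element_regular_in_adic_completion_general {x : R} (hx : IsSMulRegular M x) {k : ℕ}
    (hk : I ^ k • (⊤ : Submodule R M) ≤ x • ⊤) : IsSMulRegular (AdicCompletion I M) x := by
  have hrange : LinearMap.range (LinearMap.lsmul R M x) = x • ⊤ := LinearMap.range_eq_map _
  have hinj : Function.Injective (AdicCompletion.map I (LinearMap.lsmul R M x)) :=
    adicCompletion_map_injective_of_pow_smul_top_le_range hx (hk.trans_eq hrange.symm)
  rwa [adicCompletion_coe_map_lsmul] at hinj

end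

/-- If `x` is a nonzerodivisor of a commutative ring `A`, then the image of `x` in
the `x`-adic completion `A^∧ = lim_n A/xⁿA` is again a nonzerodivisor. -/
theorem regular_element_regular_in_adic_completion
    (A : Type*) [CommRing A] (x : A) (hx : x ∈ nonZeroDivisors A) :
    algebraMap A (AdicCompletion (Ideal.span {x}) A) x ∈
      nonZeroDivisors (AdicCompletion (Ideal.span {x}) A) := by
  rw [← isRegular_iff_mem_nonZeroDivisors, ← isLeftRegular_iff_isRegular] at hx ⊢
  have hk : Ideal.span {x} ^ 1 • (⊤ : Ideal A) ≤ x • ⊤ := by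
    rw [pow_one, Submodule.ideal_span_singleton_smul]
  have hreg : IsSMulRegular (AdicCompletion (Ideal.span {x}) A) x :=
    regular_element_regular_in_adic_completion_general hx.isSMulRegular hk
  exact ((isSMulRegular_algebraMap_iff _).mpr hreg).isLeftRegular
end

section
/- Let A be a Noetherian commutative ring, let x ∈ A, and let J ⊆ A be an ideal. Suppose that A is x-adically complete and separated (the natural map A → lim_n A/x^n A is an isomorphism) and that A/xA is J-adically complete and separated. Then A is complete and separated in the (xA + J)-adic topology, i.e., the natural map A → lim_k A/(xA + J)^k is an isomorphism. -/
/-!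
Let `K ≤ I` be ideals of a Noetherian ring and `M` a finite module such that `M` is `K`-adically
complete and `M / KM` is `I`-adically complete. Both halves of the `I`-adic completeness of `M` rest
on the fact that a linear map from a `K`-precomplete module to a `K`-separated one is surjective as
soon as it is surjective modulo `K`.

* Existence of limits: by Artin–Rees, the kernel of `M^ → (M / KM)^` between `I`-adic completions
  is `K M^`, and `M / KM → (M / KM)^` is surjective, so `M → M^` is surjective modulo `K`, hence
  surjective.
* Separatedness: by Krull, an element of `⋂ Iⁿ M` is killed by `1 - r` for some `r ∈ I`.
  Multiplication by `1 - r` is the identity modulo `I`, hence surjective on `M / KM`, hence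
  surjective on `M`, hence injective because `M` is finite.
-/

universe u

section

open AdicCompletion

variable {A : Type u} [CommRing A] {I K : Ideal A}

section Precomplete

theorem adicCompletion_map_mem_smul_top {M N : Type*} [AddCommGroup M] [Module A M]
    [AddCommGroup N] [Module A N] [Module.Finite A N] {f : N →ₗ[A] M}
    (hf : ∀ n, f n ∈ K • (⊤ : Submodule A M)) (c : AdicCompletion I N) :
    map I f c ∈ K • (⊤ : Submodule A (AdicCompletion I M)) := by
  have smul_of_mem (α : AdicCompletion I A) {m : M} (hm : m ∈ K • (⊤ : Submodule A M)) :
      α • of I M m ∈ K • (⊤ : Submodule A (AdicCompletion I M)) := by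
    induction hm using Submodule.smul_induction_on' with
    | smul k hk m _ =>
      rw [map_smul, smul_comm]
      exact Submodule.smul_mem_smul hk trivial
    | add m _ m' _ h h' =>
      rw [map_add, smul_add]
      exact add_mem h h'
  obtain ⟨t, rfl⟩ := ofTensorProduct_surjective_of_finite I N c
  induction t with
  | zero => simp
  | tmul α n =>
    rw [ofTensorProduct_tmul, map_smul, map_of]
    exact smul_of_mem α (hf n)
  | add t t' h h' =>
    rw [map_add, map_add]
    exact add_mem h h'

variable {M : Type u} [AddCommGroup M] [Module A M] [IsNoetherianRing A] [Module.Finite A M]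

theorem mem_smul_top_of_adicCompletion_map_mkQ_eq_zero {b : AdicCompletion I M}
    (hb : map I (K • (⊤ : Submodule A M)).mkQ b = 0) :
    b ∈ K • (⊤ : Submodule A (AdicCompletion I M)) := by
  have hexact := map_exact (I := I) (Submodule.subtype_injective _)
    (LinearMap.exact_subtype_mkQ (K • (⊤ : Submodule A M))) (Submodule.mkQ_surjective _)
  obtain ⟨c, rfl⟩ := (hexact b).1 hb
  exact adicCompletion_map_mem_smul_top (fun n ↦ n.2) c

theorem isPrecomplete_of_quotient (hKI : K ≤ I) [IsPrecomplete K M]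
    [IsPrecomplete I (M ⧸ K • (⊤ : Submodule A M))] : IsPrecomplete I M := by
  have : IsHausdorff K (AdicCompletion I M) := .of_map (J := I) (by simpa using hKI)
  suffices Function.Surjective ((K • ⊤ : Submodule A (AdicCompletion I M)).mkQ ∘ₗ of I M) from
    of_surjective_iff.1 (surjective_of_mkQ_comp_surjective this)
  intro z
  obtain ⟨b, rfl⟩ := Submodule.mkQ_surjective _ z
  obtain ⟨y, hy⟩ := of_surjective I _ (map I (K • (⊤ : Submodule A M)).mkQ b)
  obtain ⟨m, rfl⟩ := Submodule.mkQ_surjective _ y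
  refine ⟨m, (Submodule.Quotient.eq _).2 (mem_smul_top_of_adicCompletion_map_mkQ_eq_zero ?_)⟩
  rw [map_sub, map_of, hy, sub_self]

end Precomplete

section Hausdorff

variable {M : Type*} [AddCommGroup M] [Module A M]

theorem surjective_lsmul_one_sub [IsAdicComplete I M] {r : A} (hr : r ∈ I) :
    Function.Surjective (LinearMap.lsmul A M (1 - r)) := by
  refine surjective_of_mkQ_comp_surjective (I := I) fun z ↦ ?_
  obtain ⟨m, rfl⟩ := Submodule.mkQ_surjective _ z
  refine ⟨m, (Submodule.Quotient.eq _).2 ?_⟩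
  rw [LinearMap.lsmul_apply, sub_smul, one_smul, sub_sub_cancel_left]
  exact neg_mem (Submodule.smul_mem_smul hr trivial)

theorem surjective_lsmul_of_quotient [IsAdicComplete K M] {a : A}
    (ha : Function.Surjective (LinearMap.lsmul A (M ⧸ K • (⊤ : Submodule A M)) a)) :
    Function.Surjective (LinearMap.lsmul A M a) :=
  surjective_of_mkQ_comp_surjective (I := K) (ha.comp (Submodule.mkQ_surjective _))

variable [IsNoetherianRing A] [Module.Finite A M]

theorem isHausdorff_of_injective_lsmul_one_sub
    (h : ∀ r ∈ I, Function.Injective (LinearMap.lsmul A M (1 - r))) : IsHausdorff I M where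
  haus' m hm := by
    obtain ⟨⟨r, hrI⟩, hr⟩ := (I.mem_iInf_smul_pow_eq_bot_iff m).1 (by simpa [SModEq.zero] using hm)
    have hm_ker : LinearMap.lsmul A M (1 - r) m = 0 := by
      rw [LinearMap.lsmul_apply, sub_smul, one_smul, hr, sub_self]
    exact (map_eq_zero_iff _ (h r hrI)).1 hm_ker

theorem isHausdorff_of_quotient [IsAdicComplete K M]
    [IsAdicComplete I (M ⧸ K • (⊤ : Submodule A M))] : IsHausdorff I M :=
  isHausdorff_of_injective_lsmul_one_sub fun _ hr ↦
    OrzechProperty.injective_of_surjective_endomorphism _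
      (surjective_lsmul_of_quotient (K := K) (surjective_lsmul_one_sub hr))

end Hausdorff

theorem isAdicComplete_sup_quotient_iff {J : Ideal A} :
    IsAdicComplete (K ⊔ J) (A ⧸ K) ↔
      IsAdicComplete (J.map (Ideal.Quotient.mk K)) (A ⧸ K) := by
  rw [← IsAdicComplete.map_algebraMap_iff (S := A ⧸ K), Ideal.map_sup,
    Ideal.Quotient.algebraMap_eq, Ideal.map_quotient_self, bot_sup_eq]

theorem complete_of_complete_mod_noetherian_general [IsNoetherianRing A] (hKI : K ≤ I)
    (M : Type u) [AddCommGroup M] [Module A M] [Module.Finite A M] [IsAdicComplete K M]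
    [IsAdicComplete I (M ⧸ K • (⊤ : Submodule A M))] : IsAdicComplete I M where
  toIsHausdorff := isHausdorff_of_quotient (K := K)
  toIsPrecomplete := isPrecomplete_of_quotient hKI

end

/-- Let `A` be Noetherian, `x ∈ A`, `J ⊆ A` an ideal. If `A` is `x`-adically
complete and separated and `A/xA` is `J`-adically complete and separated, then `A` is complete
and separated in the `(xA + J)`-adic topology. -/
theorem complete_of_complete_mod_noetherian
    (A : Type*) [CommRing A] [IsNoetherianRing A] (x : A) (J : Ideal A)
    (hx : IsAdicComplete (Ideal.span {x}) A)
    (hJ : IsAdicComplete (J.map (Ideal.Quotient.mk (Ideal.span {x})))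
      (A ⧸ Ideal.span {x})) :
    IsAdicComplete (Ideal.span {x} ⊔ J) A := by
  have : IsAdicComplete (Ideal.span {x} ⊔ J) (A ⧸ Ideal.span {x} • (⊤ : Ideal A)) := by
    rwa [smul_eq_mul, Ideal.mul_top, isAdicComplete_sup_quotient_iff]
  exact complete_of_complete_mod_noetherian_general (K := Ideal.span {x}) le_sup_left A
end

section
/- Let A be a commutative ring, let x, x₁, …, x_d ∈ A, and set J = (x₁, …, x_d). Suppose that A is x-adically complete and separated (the natural map A → lim_n A/x^n A is an isomorphism), that A/xA is J-adically complete and separated, and that (x, x₁, …, x_d) is a regular sequence in A. Then A is complete and separated in the (xA + J)-adic topology, i.e., the natural map A → lim_k A/(xA + J)^k is an isomorphism. -/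
/-! Put `I = xA + J`. A power of `I` splits as `I ^ (n + 1) = x I ^ n + J ^ (n + 1)`, so once `x` is
a nonzerodivisor modulo every power of `J`, division by `x` carries `I ^ (n + 1)` into `I ^ n`.
Hence the limit in `A ⧸ xA` of an `I`-adic Cauchy sequence writes that sequence, up to a null
sequence, as `s + x g` with `g` again `I`-adically Cauchy: the map from `A` to its `I`-adic
completion is onto modulo `x`, and therefore onto because `A` is `x`-adically complete. Similarly
`⋂ I ^ n` is divisible by `x`, so it vanishes.

That `x` is a nonzerodivisor modulo `J ^ n` cannot be obtained by permuting the sequence, since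
regular sequences need not be permutable here. Instead one shows, for a regular sequence
`x, z₁, …, z_k, y` and `K = (z₁, …, z_k)`, that `x` is regular modulo `K ^ n` and `y` is regular
modulo `(x) + K ^ n`, for all `n`. For any ideal `K`, these two properties imply that `x` is
regular modulo `((y) + K) ^ n` and `y` is regular modulo `((x) + K) ^ n`. Applied to `x, z_k` with
`(z₁, …, z_{k-1})` and, over `A ⧸ xA`, to `z₁, y` with `(z₂, …, z_k)`, this is the inductive
step. -/

open Ideal RingTheory.Sequence
open scoped Pointwise

universe u v

variable {R : Type u} [CommRing R] {M : Type v} [AddCommGroup M] [Module R M]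

section Powers

theorem add_pow_succ_eq_mul_add_pow {α : Type*} [IdemCommSemiring α] (a b : α) (n : ℕ) :
    (a + b) ^ (n + 1) = a * (a + b) ^ n + b ^ (n + 1) := by
  induction n with
  | zero => simp
  | succ n ih =>
    calc (a + b) ^ (n + 2) = a * (a + b) ^ (n + 1) + b * (a + b) ^ (n + 1) := by
          rw [pow_succ', add_mul]
      _ = a * (a + b) ^ (n + 1) + b * (a * (a + b) ^ n + b ^ (n + 1)) := by
          rw [← ih]
      _ = (a * a + (a * b + a * b)) * (a + b) ^ n + b ^ (n + 2) := by
          ring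
      _ = a * (a + b) ^ (n + 1) + b ^ (n + 2) := by
          rw [add_idem, ← mul_add, mul_assoc, ← pow_succ']

theorem mem_span_singleton_sup_pow_succ_smul_top_iff {x : R} {J : Ideal R} {n : ℕ} {m : M} :
    m ∈ ((span {x} ⊔ J) ^ (n + 1) • ⊤ : Submodule R M) ↔
      ∃ b ∈ ((span {x} ⊔ J) ^ n • ⊤ : Submodule R M),
        ∃ c ∈ (J ^ (n + 1) • ⊤ : Submodule R M), x • b + c = m := by
  simp only [← Submodule.add_eq_sup, add_pow_succ_eq_mul_add_pow]
  simp only [Submodule.add_eq_sup, Submodule.sup_smul, Submodule.mul_smul,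
    Submodule.ideal_span_singleton_smul, Submodule.mem_sup, Submodule.mem_smul_pointwise_iff_exists,
    exists_exists_and_eq_and]

theorem mk_mem_smul_top_quotSMulTop_iff {x : R} {I : Ideal R} {m : M} :
    (Submodule.Quotient.mk m : QuotSMulTop x M) ∈ (I • ⊤ : Submodule R (QuotSMulTop x M)) ↔
      ∃ b, ∃ c ∈ (I • ⊤ : Submodule R M), x • b + c = m := by
  have hcomap : (I • ⊤ : Submodule R (QuotSMulTop x M)).comap (Submodule.mkQ _) =
      x • ⊤ ⊔ I • ⊤ := by
    rw [← Submodule.comap_map_mkQ, Submodule.map_smul'', Submodule.map_top, Submodule.range_mkQ]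
  rw [← Submodule.mkQ_apply, ← Submodule.mem_comap, hcomap]
  simp only [Submodule.mem_sup, Submodule.mem_smul_pointwise_iff_exists, Submodule.mem_top,
    true_and, exists_exists_eq_and]

theorem mk_mem_smul_top_of_mem {x : R} {I : Ideal R} {m : M} (hm : m ∈ (I • ⊤ : Submodule R M)) :
    (Submodule.Quotient.mk m : QuotSMulTop x M) ∈ (I • ⊤ : Submodule R (QuotSMulTop x M)) :=
  mk_mem_smul_top_quotSMulTop_iff.mpr ⟨0, m, hm, by simp⟩

theorem pow_smul_top_le_span_singleton_sup_pow_smul_top (x : R) (J : Ideal R) (n : ℕ) :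
    (J ^ n • ⊤ : Submodule R M) ≤ (span {x} ⊔ J) ^ n • ⊤ :=
  Submodule.smul_mono_left (pow_right_mono le_sup_right n)

end Powers

section RegularPair

variable {x y : R} {K : Ideal R}

theorem mem_smul_top_of_smul_mem_quotSMulTop {I : Ideal R}
    (hy : IsSMulRegular (QuotSMulTop x M ⧸ (I • ⊤ : Submodule R (QuotSMulTop x M))) y) {m b c : M}
    (hc : c ∈ (I • ⊤ : Submodule R M)) (h : x • b + c = y • m) :
    ∃ b', ∃ c' ∈ (I • ⊤ : Submodule R M), x • b' + c' = m :=
  mk_mem_smul_top_quotSMulTop_iff.mp <|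
    mem_of_isSMulRegular_quotient_of_smul_mem hy <|
      mk_mem_smul_top_quotSMulTop_iff.mpr ⟨b, c, hc, h⟩

theorem isSMulRegular_quotient_sup_pow_left
    (hx : ∀ n, IsSMulRegular (M ⧸ (K ^ n • ⊤ : Submodule R M)) x)
    (hy : ∀ n, IsSMulRegular
      (QuotSMulTop x M ⧸ (K ^ n • ⊤ : Submodule R (QuotSMulTop x M))) y) (n : ℕ) :
    IsSMulRegular (M ⧸ ((span {y} ⊔ K) ^ n • ⊤ : Submodule R M)) x := by
  rw [isSMulRegular_quotient_iff_mem_of_smul_mem]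
  induction n with
  | zero => simp
  | succ n ih =>
    intro m hm
    obtain ⟨b, hb, c, hc, hxm⟩ := mem_span_singleton_sup_pow_succ_smul_top_iff.mp hm
    obtain ⟨b', c', hc', rfl⟩ : ∃ b', ∃ c' ∈ (K ^ (n + 1) • ⊤ : Submodule R M), x • b' + c' = b :=
      mem_smul_top_of_smul_mem_quotSMulTop (hy (n + 1)) (neg_mem hc) (b := m)
        (by rw [← hxm]; abel)
    have hb' : b' ∈ ((span {y} ⊔ K) ^ n • ⊤ : Submodule R M) := by
      refine ih b' ((Submodule.add_mem_iff_left _ ?_).mp hb)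
      exact pow_smul_top_le_span_singleton_sup_pow_smul_top _ _ _
        (Submodule.pow_smul_top_le K M n.le_succ hc')
    have hmb : m - y • b' ∈ (K ^ (n + 1) • ⊤ : Submodule R M) := by
      refine mem_of_isSMulRegular_quotient_of_smul_mem (hx (n + 1)) ?_
      have : x • (m - y • b') = y • c' + c := by
        rw [smul_sub, ← hxm, smul_add, smul_comm x y]; abel
      exact this ▸ add_mem (Submodule.smul_mem _ _ hc') hc
    exact mem_span_singleton_sup_pow_succ_smul_top_iff.mpr ⟨b', hb', _, hmb, add_sub_cancel _ _⟩

theorem isSMulRegular_quotient_sup_pow_right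
    (hx : ∀ n, IsSMulRegular (M ⧸ (K ^ n • ⊤ : Submodule R M)) x)
    (hy : ∀ n, IsSMulRegular
      (QuotSMulTop x M ⧸ (K ^ n • ⊤ : Submodule R (QuotSMulTop x M))) y) (n : ℕ) :
    IsSMulRegular (M ⧸ ((span {x} ⊔ K) ^ n • ⊤ : Submodule R M)) y := by
  rw [isSMulRegular_quotient_iff_mem_of_smul_mem]
  induction n with
  | zero => simp
  | succ n ih =>
    intro m hm
    obtain ⟨b, hb, c, hc, hym⟩ := mem_span_singleton_sup_pow_succ_smul_top_iff.mp hm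
    obtain ⟨b', c', hc', rfl⟩ := mem_smul_top_of_smul_mem_quotSMulTop (hy (n + 1)) hc hym
    have hyb : y • b' - b ∈ (K ^ (n + 1) • ⊤ : Submodule R M) := by
      refine mem_of_isSMulRegular_quotient_of_smul_mem (hx (n + 1)) ?_
      have : x • (y • b' - b) = c - y • c' := by
        rw [smul_sub, smul_comm x y, sub_eq_sub_iff_add_eq_add, ← smul_add, ← hym, add_comm]
      exact this ▸ sub_mem hc (Submodule.smul_mem _ _ hc')
    have hb' : b' ∈ ((span {x} ⊔ K) ^ n • ⊤ : Submodule R M) := by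
      refine ih b' ((Submodule.sub_mem_iff_left _ hb).mp ?_)
      exact pow_smul_top_le_span_singleton_sup_pow_smul_top _ _ _
        (Submodule.pow_smul_top_le K M n.le_succ hyb)
    exact mem_span_singleton_sup_pow_succ_smul_top_iff.mpr ⟨b', hb', c', hc', rfl⟩

end RegularPair

section RegularSequence

theorem isSMulRegular_quotient_bot_pow {x : R} (hx : IsSMulRegular M x) (n : ℕ) :
    IsSMulRegular (M ⧸ ((⊥ : Ideal R) ^ n • ⊤ : Submodule R M)) x := by
  cases n with
  | zero => simp [isSMulRegular_quotient_iff_mem_of_smul_mem]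
  | succ n =>
    have h_bot : ((⊥ : Ideal R) ^ (n + 1) • ⊤ : Submodule R M) = ⊥ := by
      rw [bot_pow n.succ_ne_zero, Submodule.bot_smul]
    exact ((Submodule.quotEquivOfEqBot _ h_bot).isSMulRegular_congr x).mpr hx

theorem isSMulRegular_quotient_ofList_pow_of_cons_concat (rs : List R) :
    ∀ {M : Type v} [AddCommGroup M] [Module R M] {x y : R},
      IsWeaklyRegular M (x :: (rs ++ [y])) → ∀ n,
        IsSMulRegular (M ⧸ (ofList rs ^ n • ⊤ : Submodule R M)) x ∧
        IsSMulRegular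
          (QuotSMulTop x M ⧸ (ofList rs ^ n • ⊤ : Submodule R (QuotSMulTop x M))) y := by
  induction hk : rs.length generalizing rs with
  | zero =>
    obtain rfl := List.length_eq_zero_iff.mp hk
    intro M _ _ x y h n
    simp only [List.nil_append, isWeaklyRegular_cons_iff] at h
    rw [ofList_nil]
    exact ⟨isSMulRegular_quotient_bot_pow h.1 n, isSMulRegular_quotient_bot_pow h.2.1 n⟩
  | succ k ih =>
    intro M _ _ x y h n
    constructor
    · obtain ⟨init, z, rfl⟩ := rs.eq_nil_or_concat'.resolve_left (by rintro rfl; simp at hk)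
      have hpair := ih init (by simpa using hk) (M := M) (x := x) (y := z)
        ((isWeaklyRegular_append_iff M (x :: (init ++ [z])) [y]).mp h).1
      rw [ofList_append, ofList_singleton, sup_comm]
      exact isSMulRegular_quotient_sup_pow_left (fun n ↦ (hpair n).1) (fun n ↦ (hpair n).2) n
    · obtain ⟨z, tail, rfl⟩ := List.exists_cons_of_length_eq_add_one hk
      have hpair := ih tail (by simpa using hk) ((isWeaklyRegular_cons_iff M x _).mp h).2
      rw [ofList_cons]
      exact isSMulRegular_quotient_sup_pow_right (fun n ↦ (hpair n).1) (fun n ↦ (hpair n).2) n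

theorem isSMulRegular_quotient_ofList_pow_of_cons {x : R} {rs : List R}
    (h : IsWeaklyRegular M (x :: rs)) (n : ℕ) :
    IsSMulRegular (M ⧸ (ofList rs ^ n • ⊤ : Submodule R M)) x := by
  have h_concat : IsWeaklyRegular M (x :: (rs ++ [1])) :=
    (isWeaklyRegular_append_iff M (x :: rs) [1]).mpr
      ⟨h, (isWeaklyRegular_singleton_iff _ _).mpr (IsSMulRegular.one _)⟩
  exact (isSMulRegular_quotient_ofList_pow_of_cons_concat rs h_concat n).1

theorem mem_span_singleton_sup_pow_smul_top_of_smul_mem {x : R} {J : Ideal R}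
    (hx : ∀ n, IsSMulRegular (M ⧸ (J ^ n • ⊤ : Submodule R M)) x) (n : ℕ) (m : M)
    (hm : x • m ∈ ((span {x} ⊔ J) ^ (n + 1) • ⊤ : Submodule R M)) :
    m ∈ ((span {x} ⊔ J) ^ n • ⊤ : Submodule R M) := by
  obtain ⟨b, hb, c, hc, hxm⟩ := mem_span_singleton_sup_pow_succ_smul_top_iff.mp hm
  have hmb : m - b ∈ (J ^ (n + 1) • ⊤ : Submodule R M) := by
    refine mem_of_isSMulRegular_quotient_of_smul_mem (hx (n + 1)) ?_
    rwa [smul_sub, ← hxm, add_sub_cancel_left]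
  refine (Submodule.sub_mem_iff_left _ hb).mp ?_
  exact pow_smul_top_le_span_singleton_sup_pow_smul_top _ _ _
    (Submodule.pow_smul_top_le J M n.le_succ hmb)

end RegularSequence

section Complete

variable {I : Ideal R} {x : R}

theorem isHausdorff_of_quotSMulTop [IsHausdorff (span {x}) M] [IsHausdorff I (QuotSMulTop x M)]
    (hcolon : ∀ (n : ℕ) (m : M), x • m ∈ (I ^ (n + 1) • ⊤ : Submodule R M) →
      m ∈ (I ^ n • ⊤ : Submodule R M)) :
    IsHausdorff I M := by
  have exists_smul_eq (a : M) (ha : ∀ n, a ∈ (I ^ n • ⊤ : Submodule R M)) :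
      ∃ b : M, x • b = a ∧ ∀ n, b ∈ (I ^ n • ⊤ : Submodule R M) := by
    have ha_mk : (Submodule.Quotient.mk a : QuotSMulTop x M) = 0 :=
      IsHausdorff.haus ‹_› _ fun n ↦ SModEq.zero.mpr (mk_mem_smul_top_of_mem (ha n))
    obtain ⟨b, -, rfl⟩ := (Submodule.Quotient.mk_eq_zero _).mp ha_mk
    exact ⟨b, rfl, fun n ↦ hcolon n b (ha (n + 1))⟩
  have mem_pow (n : ℕ) : ∀ a : M, (∀ k, a ∈ (I ^ k • ⊤ : Submodule R M)) →
      a ∈ (span {x} ^ n • ⊤ : Submodule R M) := by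
    induction n with
    | zero => simp
    | succ n ih =>
      intro a ha
      obtain ⟨b, rfl, hb⟩ := exists_smul_eq a ha
      rw [pow_succ', Submodule.mul_smul]
      exact Submodule.smul_mem_smul (mem_span_singleton_self x) (ih b hb)
  refine ⟨fun a ha ↦ IsHausdorff.haus ‹IsHausdorff (span {x}) M› a fun n ↦ ?_⟩
  exact SModEq.zero.mpr (mem_pow n a fun k ↦ SModEq.zero.mp (ha k))

theorem exists_of_add_smul_eq_of_quotSMulTop [IsPrecomplete I (QuotSMulTop x M)]
    (hcolon : ∀ (n : ℕ) (m : M), x • m ∈ (I ^ (n + 1) • ⊤ : Submodule R M) →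
      m ∈ (I ^ n • ⊤ : Submodule R M)) (a : AdicCompletion I M) :
    ∃ (s : M) (b : AdicCompletion I M), AdicCompletion.of I M s + x • b = a := by
  obtain ⟨f, rfl⟩ := AdicCompletion.mk_surjective I M a
  have f_sub_mem (n : ℕ) : f n - f (n + 1) ∈ (I ^ n • ⊤ : Submodule R M) :=
    SModEq.sub_mem.mp (f.2 n.le_succ)
  obtain ⟨s, hs⟩ : ∃ s : M, ∀ n, (Submodule.Quotient.mk (f n - s) : QuotSMulTop x M) ∈
      (I ^ n • ⊤ : Submodule R (QuotSMulTop x M)) := by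
    obtain ⟨s, hs⟩ := IsPrecomplete.prec ‹_› (I := I)
      (f := fun n ↦ (Submodule.Quotient.mk (f n) : QuotSMulTop x M))
      fun {m n} hmn ↦ SModEq.sub_mem.mpr (mk_mem_smul_top_of_mem (SModEq.sub_mem.mp (f.2 hmn)))
    obtain ⟨s, rfl⟩ := Submodule.Quotient.mk_surjective _ s
    exact ⟨s, fun n ↦ SModEq.sub_mem.mp (hs n)⟩
  choose g u hu hgu using fun n ↦ mk_mem_smul_top_quotSMulTop_iff.mp (hs n)
  have hu_succ (n : ℕ) : u (n + 1) ∈ (I ^ n • ⊤ : Submodule R M) :=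
    Submodule.pow_smul_top_le I M n.le_succ (hu (n + 1))
  have g_sub_mem (n : ℕ) : g (n + 1) - g (n + 2) ∈ (I ^ n • ⊤ : Submodule R M) := by
    refine hcolon n _ ?_
    have : x • (g (n + 1) - g (n + 2)) = f (n + 1) - f (n + 2) - u (n + 1) + u (n + 2) := by
      rw [smul_sub, eq_sub_of_add_eq (hgu (n + 1)), eq_sub_of_add_eq (hgu (n + 2))]; abel
    exact this ▸ add_mem (sub_mem (f_sub_mem (n + 1)) (hu (n + 1))) (hu_succ (n + 1))
  refine ⟨s, AdicCompletion.mk I M (.mk I M (fun n ↦ g (n + 1))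
    fun n ↦ SModEq.sub_mem.mpr (g_sub_mem n)), ?_⟩
  ext n
  refine SModEq.sub_mem.mpr (?_ : s + x • g (n + 1) - f n ∈ _)
  have : s + x • g (n + 1) - f n = -(f n - f (n + 1)) - u (n + 1) := by
    rw [eq_sub_of_add_eq (hgu (n + 1))]; abel
  exact this ▸ sub_mem (neg_mem (f_sub_mem n)) (hu_succ n)

theorem isPrecomplete_of_quotSMulTop (hxI : x ∈ I) [IsPrecomplete (span {x}) M]
    [IsPrecomplete I (QuotSMulTop x M)]
    (hcolon : ∀ (n : ℕ) (m : M), x • m ∈ (I ^ (n + 1) • ⊤ : Submodule R M) →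
      m ∈ (I ^ n • ⊤ : Submodule R M)) :
    IsPrecomplete I M := by
  have : IsHausdorff (span {x}) (AdicCompletion I M) :=
    IsHausdorff.of_map (J := I) (by simpa [span_le] using hxI)
  refine AdicCompletion.of_surjective_iff.mp
    (surjective_of_mkQ_comp_surjective (I := span {x}) fun a ↦ ?_)
  obtain ⟨a, rfl⟩ := Submodule.Quotient.mk_surjective _ a
  obtain ⟨s, b, rfl⟩ := exists_of_add_smul_eq_of_quotSMulTop hcolon a
  refine ⟨s, SModEq.sub_mem.mpr ?_⟩
  rw [sub_add_cancel_left]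
  exact neg_mem (Submodule.smul_mem_smul (mem_span_singleton_self x) Submodule.mem_top)

theorem isAdicComplete_of_quotSMulTop (hxI : x ∈ I) [IsAdicComplete (span {x}) M]
    [IsAdicComplete I (QuotSMulTop x M)]
    (hcolon : ∀ (n : ℕ) (m : M), x • m ∈ (I ^ (n + 1) • ⊤ : Submodule R M) →
      m ∈ (I ^ n • ⊤ : Submodule R M)) :
    IsAdicComplete I M where
  toIsHausdorff := isHausdorff_of_quotSMulTop hcolon
  toIsPrecomplete := isPrecomplete_of_quotSMulTop hxI hcolon

theorem isAdicComplete_quotSMulTop_span_singleton_sup_iff {J : Ideal R} :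
    IsAdicComplete (span {x} ⊔ J) (QuotSMulTop x M) ↔ IsAdicComplete J (QuotSMulTop x M) := by
  have map_eq : (span {x} ⊔ J).map (algebraMap R (R ⧸ span {x})) = J.map (algebraMap R _) := by
    rw [Ideal.map_sup, Quotient.algebraMap_eq, map_quotient_self, bot_sup_eq]
  rw [← IsAdicComplete.map_algebraMap_iff (S := R ⧸ span {x}), map_eq,
    IsAdicComplete.map_algebraMap_iff]

theorem isAdicComplete_quotSMulTop_self_iff {J : Ideal R} :
    IsAdicComplete J (QuotSMulTop x R) ↔
      IsAdicComplete (J.map (Ideal.Quotient.mk (span {x}))) (R ⧸ span {x}) := by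
  have smul_top : x • (⊤ : Ideal R) = span {x} := by
    rw [← Submodule.ideal_span_singleton_smul, smul_eq_mul, mul_top]
  rw [← Quotient.algebraMap_eq, IsAdicComplete.map_algebraMap_iff]
  change IsAdicComplete J (R ⧸ x • (⊤ : Ideal R)) ↔ _
  rw [smul_top]

theorem isAdicComplete_span_singleton_sup {J : Ideal R} [IsAdicComplete (span {x}) M]
    (hreg : ∀ n, IsSMulRegular (M ⧸ (J ^ n • ⊤ : Submodule R M)) x)
    (hJ : IsAdicComplete J (QuotSMulTop x M)) :
    IsAdicComplete (span {x} ⊔ J) M :=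
  have := isAdicComplete_quotSMulTop_span_singleton_sup_iff.mpr hJ
  isAdicComplete_of_quotSMulTop (mem_sup_left (mem_span_singleton_self x))
    (mem_span_singleton_sup_pow_smul_top_of_smul_mem hreg)

end Complete

theorem complete_of_complete_mod_regular_sequence_general {x : R} {rs : List R}
    [IsAdicComplete (span {x}) M] (hreg : IsWeaklyRegular M (x :: rs))
    (hJ : IsAdicComplete (ofList rs) (QuotSMulTop x M)) :
    IsAdicComplete (span {x} ⊔ ofList rs) M :=
  isAdicComplete_span_singleton_sup (isSMulRegular_quotient_ofList_pow_of_cons hreg) hJ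

theorem ofList_ofFn_eq_span_range {d : ℕ} (xs : Fin d → R) :
    ofList (List.ofFn xs) = span (Set.range xs) := by
  simp [ofList, Set.range]

/-- Let `A` be a commutative ring, `x, x₁, …, x_d ∈ A`, and `J = (x₁, …, x_d)`.
If `A` is `x`-adically complete and separated, `A/xA` is `J`-adically complete and separated,
and `(x, x₁, …, x_d)` is a regular sequence in `A`, then `A` is complete and separated in the
`(xA + J)`-adic topology. -/
theorem complete_of_complete_mod_regular_sequence
    (A : Type*) [CommRing A] (x : A) (d : ℕ) (xs : Fin d → A)
    (hreg : RingTheory.Sequence.IsRegular A (x :: List.ofFn xs))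
    (hx : IsAdicComplete (Ideal.span {x}) A)
    (hJ : IsAdicComplete ((Ideal.span (Set.range xs)).map
      (Ideal.Quotient.mk (Ideal.span {x}))) (A ⧸ Ideal.span {x})) :
    IsAdicComplete (Ideal.span {x} ⊔ Ideal.span (Set.range xs)) A := by
  rw [← ofList_ofFn_eq_span_range] at hJ ⊢
  exact complete_of_complete_mod_regular_sequence_general hreg.toIsWeaklyRegular
    (isAdicComplete_quotSMulTop_self_iff.mpr hJ)
end

section
/- Let p be a prime, let B be a perfect F_p-algebra that is an integral domain, and let K be the fraction field of B. Then the p-adic completion of the localization W(B)_{(p)} of W(B) at the prime ideal (p) is isomorphic, as a ring, to the ring of p-typical Witt vectors W(K). -/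
/-!
Let `L` be the localization of `𝕎 B` at `(p)`. A Witt vector over `B` outside `(p)` has nonzero
zeroth coefficient, so it becomes a unit in `𝕎 K` and `𝕎 B → 𝕎 K` extends to `f : L → 𝕎 K`. Since
`K` is again perfect, `𝕎 K` is `p`-adically complete, `p` is regular on it, and `𝕎 K / p = K`; hence
`f` further extends to the `p`-adic completion of `L`. A map between `p`-adically complete rings
whose target has no `p`-torsion is bijective once it is so modulo `p`. Modulo `p` the map `f` is
injective because an element of `𝕎 B` is divisible by `p` exactly when its zeroth coefficient
vanishes, a condition that can be tested in `K`, and it is surjective because `a / b` in `K` is the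
zeroth coefficient of the image of the quotient of Teichmüller lifts `[a] / [b]`.
-/

open Ideal WittVector

section AdicCompletionLift

variable {R S : Type*} [CommRing R] [CommRing S]

theorem injective_of_comap_map_span_singleton_le {ϖ : R} [IsHausdorff (span {ϖ}) R] (g : R →+* S)
    (hϖ : g ϖ ∈ nonZeroDivisors S) (hg : ((span {ϖ}).map g).comap g ≤ span {ϖ}) :
    Function.Injective g := by
  have pow_dvd (n : ℕ) : ∀ x, g x = 0 → ϖ ^ n ∣ x := by
    induction n with
    | zero => exact fun x _ ↦ by simp
    | succ n ih =>
      intro x hx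
      obtain ⟨y, rfl⟩ : ϖ ∣ x := mem_span_singleton.1 (hg (by simp [mem_comap, hx]))
      have hy : g y = 0 := by
        rw [map_mul] at hx
        exact (mul_left_mem_nonZeroDivisors_eq_zero_iff hϖ).1 hx
      exact pow_succ' ϖ n ▸ mul_dvd_mul_left ϖ (ih y hy)
  refine (injective_iff_map_eq_zero g).2 fun x hx ↦ IsHausdorff.haus ‹_› x fun n ↦ ?_
  rw [SModEq.zero, smul_eq_mul, mul_top, span_singleton_pow, mem_span_singleton]
  exact pow_dvd n x hx

theorem pow_le_comap_map_pow (I : Ideal R) (f : R →+* S) (n : ℕ) :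
    I ^ n ≤ (I.map f ^ n).comap f :=
  Ideal.map_pow f I n ▸ le_comap_map

theorem factorPow_evalₐ (I : Ideal R) {m n : ℕ} (h : m ≤ n) (x : AdicCompletion I R) :
    Quotient.factorPow I h (AdicCompletion.evalₐ I n x) = AdicCompletion.evalₐ I m x := by
  induction x using AdicCompletion.induction_on with
  | h x => simpa using AdicCompletion.Ideal.mk_eq_mk I h x

theorem factorPow_comp_quotientMap_evalₐ (I : Ideal R) (f : R →+* S) {m n : ℕ} (h : m ≤ n) :
    (Quotient.factorPow (I.map f) h).comp
      ((quotientMap (I.map f ^ n) f (pow_le_comap_map_pow I f n)).comp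
        (AdicCompletion.evalₐ I n : AdicCompletion I R →+* R ⧸ I ^ n)) =
      (quotientMap (I.map f ^ m) f (pow_le_comap_map_pow I f m)).comp
        (AdicCompletion.evalₐ I m : AdicCompletion I R →+* R ⧸ I ^ m) := by
  ext x
  obtain ⟨r, hr⟩ := Ideal.Quotient.mk_surjective (AdicCompletion.evalₐ I n x)
  simp [← factorPow_evalₐ I h x, ← hr]

/-- The extension of `f : R →+* S` to the `I`-adic completion of `R`, for a target that is complete
for the extended ideal `I S`; it is glued from the maps `R ⧸ I ^ n → S ⧸ (I S) ^ n`. -/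
noncomputable def adicCompletionLift (I : Ideal R) (f : R →+* S) [IsAdicComplete (I.map f) S] :
    AdicCompletion I R →+* S :=
  IsAdicComplete.liftRingHom (I.map f) _ (factorPow_comp_quotientMap_evalₐ I f)

variable (I : Ideal R) (f : R →+* S) [IsAdicComplete (I.map f) S]

theorem mk_adicCompletionLift (n : ℕ) (x : AdicCompletion I R) :
    Ideal.Quotient.mk (I.map f ^ n) (adicCompletionLift I f x) =
      quotientMap (I.map f ^ n) f (pow_le_comap_map_pow I f n) (AdicCompletion.evalₐ I n x) :=
  IsAdicComplete.mk_liftRingHom (I.map f) _ (factorPow_comp_quotientMap_evalₐ I f) n x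

@[simp]
theorem adicCompletionLift_algebraMap (r : R) :
    adicCompletionLift I f (algebraMap R (AdicCompletion I R) r) = f r := by
  refine (IsHausdorff.eq_iff_smodEq (I := I.map f)).2 fun n ↦ ?_
  rw [smul_eq_mul, mul_top, SModEq.def]
  exact (mk_adicCompletionLift I f n _).trans (by simp [AdicCompletion.algebraMap_apply])

theorem map_adicCompletionLift_map_algebraMap :
    (I.map (algebraMap R (AdicCompletion I R))).map (adicCompletionLift I f) = I.map f := by
  rw [Ideal.map_map]
  congr 1
  ext r
  simp

variable {I f}

theorem comap_adicCompletionLift_le (hI : I.FG) (hf : (I.map f).comap f ≤ I) :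
    (I.map f).comap (adicCompletionLift I f) ≤ I.map (algebraMap R (AdicCompletion I R)) := by
  intro x hx
  obtain ⟨r, hr⟩ := Ideal.Quotient.mk_surjective (AdicCompletion.evalOneₐ I x)
  have hxr : x - algebraMap R _ r ∈ I.map (algebraMap R (AdicCompletion I R)) := by
    rw [← AdicCompletion.ker_evalOneₐ_eq_map I hI]
    simp [RingHom.mem_ker, ← hr]
  have hfr : f r ∈ I.map f := by
    have := mem_map_of_mem (adicCompletionLift I f) hxr
    rw [map_adicCompletionLift_map_algebraMap, map_sub, adicCompletionLift_algebraMap] at this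
    simpa using sub_mem (mem_comap.1 hx) this
  simpa using add_mem hxr (mem_map_of_mem _ (hf hfr))

theorem adicCompletionLift_surjective (hI : I.FG)
    (hf : Function.Surjective ((Ideal.Quotient.mk (I.map f)).comp f)) :
    Function.Surjective (adicCompletionLift I f) := by
  have := AdicCompletion.isAdicComplete_self I hI
  have hmap := map_adicCompletionLift_map_algebraMap I f
  have : IsHausdorff ((I.map (algebraMap R (AdicCompletion I R))).map (adicCompletionLift I f)) S :=
    hmap ▸ inferInstance
  refine surjective_of_mk_map_comp_surjective (I := I.map (algebraMap R (AdicCompletion I R))) _ ?_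
  rw [hmap]
  intro y
  obtain ⟨r, rfl⟩ := hf y
  exact ⟨algebraMap R _ r, by simp⟩

theorem adicCompletionLift_bijective {ϖ : R} [IsAdicComplete ((span {ϖ}).map f) S]
    (hϖ : f ϖ ∈ nonZeroDivisors S) (hinj : ((span {ϖ}).map f).comap f ≤ span {ϖ})
    (hsurj : Function.Surjective ((Ideal.Quotient.mk ((span {ϖ}).map f)).comp f)) :
    Function.Bijective (adicCompletionLift (span {ϖ}) f) := by
  have hfg : (span {ϖ}).FG := ⟨{ϖ}, by simp⟩
  refine ⟨?_, adicCompletionLift_surjective hfg hsurj⟩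
  have hcomap := comap_adicCompletionLift_le hfg hinj
  rw [← map_adicCompletionLift_map_algebraMap] at hcomap
  have := AdicCompletion.isAdicComplete_self (span {ϖ}) hfg
  simp only [map_span, Set.image_singleton] at this hcomap
  refine injective_of_comap_map_span_singleton_le (ϖ := algebraMap R _ ϖ) _ ?_ ?_
  · rwa [adicCompletionLift_algebraMap]
  · rwa [map_span, Set.image_singleton]

end AdicCompletionLift

theorem perfectRing_of_isLocalization {R : Type*} [CommRing R] (M : Submonoid R) (S : Type*)
    [CommRing S] [Algebra R S] [IsLocalization M S] {p : ℕ} (hp : p ≠ 0) [PerfectRing R p] :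
    PerfectRing S p where
  bijective_frobenius := by
    have hR : Function.Bijective fun x : R ↦ x ^ p := PerfectRing.bijective_frobenius
    constructor
    · intro x y hxy
      obtain ⟨a, s, rfl⟩ := IsLocalization.exists_mk'_eq M x
      obtain ⟨b, t, rfl⟩ := IsLocalization.exists_mk'_eq M y
      simp only [← IsLocalization.mk'_pow, IsLocalization.eq, SubmonoidClass.coe_pow] at hxy ⊢
      obtain ⟨m, hm⟩ := hxy
      refine ⟨m, hR.injective ?_⟩
      simp only [mul_pow]
      obtain ⟨k, rfl⟩ := Nat.exists_eq_succ_of_ne_zero hp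
      rw [pow_succ, mul_assoc, hm, mul_assoc]
    · intro x
      obtain ⟨a, s, rfl⟩ := IsLocalization.exists_mk'_eq M x
      -- `a / s = (a * s ^ (p - 1)) / s ^ p`
      obtain ⟨b, hb : b ^ p = a * s ^ (p - 1)⟩ := hR.surjective (a * s ^ (p - 1))
      refine ⟨IsLocalization.mk' S b s, ?_⟩
      simp only [← IsLocalization.mk'_pow, hb]
      refine IsLocalization.mk'_eq_of_eq ?_
      rw [SubmonoidClass.coe_pow, ← pow_sub_one_mul hp (s : R)]
      ring

section Witt

variable {p : ℕ} [Fact p.Prime] {B : Type*} [CommRing B] [CharP B p] [PerfectRing B p]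

theorem isPrime_span_natCast_wittVector [IsDomain B] : (span {(p : WittVector p B)}).IsPrime :=
  ker_constantCoeff (p := p) (k := B) ▸ RingHom.ker_isPrime _

theorem natCast_mem_nonZeroDivisors_wittVector :
    (p : WittVector p B) ∈ nonZeroDivisors (WittVector p B) :=
  mem_nonZeroDivisors_iff_right.2 eq_zero_of_p_mul_eq_zero

theorem isUnit_map_of_notMem_span_natCast {K : Type*} [Field K] {φ : B →+* K}
    (hφ : Function.Injective φ) {x : WittVector p B} (hx : x ∉ span {(p : WittVector p B)}) :
    IsUnit (WittVector.map φ x) := by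
  have := charP_of_injective_ringHom hφ p
  apply isUnit_of_coeff_zero_ne_zero
  rwa [map_coeff, map_ne_zero_iff φ hφ, ne_eq, ← mem_span_p_iff_coeff_zero_eq_zero]

variable (p B) [(span {(p : WittVector p B)}).IsPrime] (K : Type*) [Field K] [Algebra B K]
  [IsFractionRing B K] (L : Type*) [CommRing L] [Algebra (WittVector p B) L]
  [IsLocalization.AtPrime L (span {(p : WittVector p B)})]

/-- The extension of `𝕎 B → 𝕎 K` to a localization `L` of `𝕎 B` at `(p)`, where `K` is the fraction
field of `B`. -/
noncomputable def localizationToWittVector : L →+* WittVector p K :=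
  IsLocalization.lift (M := (span {(p : WittVector p B)}).primeCompl)
    fun x ↦ isUnit_map_of_notMem_span_natCast (IsFractionRing.injective B K) x.2

@[simp]
theorem localizationToWittVector_algebraMap (x : WittVector p B) :
    localizationToWittVector p B K L (algebraMap (WittVector p B) L x) =
      WittVector.map (algebraMap B K) x :=
  IsLocalization.lift_eq _ x

theorem localizationToWittVector_mk'_mul (x : WittVector p B)
    (s : (span {(p : WittVector p B)}).primeCompl) :
    localizationToWittVector p B K L (IsLocalization.mk' L x s) *
        WittVector.map (algebraMap B K) s = WittVector.map (algebraMap B K) x := by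
  rw [← localizationToWittVector_algebraMap p B K L, ← map_mul, IsLocalization.mk'_spec,
    localizationToWittVector_algebraMap]

theorem comap_localizationToWittVector_le [CharP K p] [PerfectRing K p] :
    (span {(p : WittVector p K)}).comap (localizationToWittVector p B K L) ≤ span {(p : L)} := by
  intro y hy
  obtain ⟨x, s, rfl⟩ := IsLocalization.exists_mk'_eq (span {(p : WittVector p B)}).primeCompl y
  have hx : WittVector.map (algebraMap B K) x ∈ span {(p : WittVector p K)} :=
    localizationToWittVector_mk'_mul p B K L x s ▸ mul_mem_right _ _ hy
  rw [mem_span_p_iff_coeff_zero_eq_zero, map_coeff,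
    map_eq_zero_iff _ (IsFractionRing.injective B K), ← mem_span_p_iff_coeff_zero_eq_zero,
    mem_span_singleton'] at hx
  obtain ⟨a, rfl⟩ := hx
  refine mem_span_singleton'.2 ⟨IsLocalization.mk' L a s, ?_⟩
  rw [IsLocalization.eq_mk'_iff_mul_eq, mul_right_comm, IsLocalization.mk'_spec, map_mul,
    map_natCast]

theorem exists_coeff_zero_localizationToWittVector_eq (c : K) :
    ∃ y : L, (localizationToWittVector p B K L y).coeff 0 = c := by
  obtain ⟨a, b, hb, rfl⟩ := IsFractionRing.div_surjective B c
  have hbK : algebraMap B K b ≠ 0 :=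
    (IsLocalization.map_units K (⟨b, hb⟩ : nonZeroDivisors B)).ne_zero
  have hbp : teichmuller p b ∈ (span {(p : WittVector p B)}).primeCompl := by
    intro h
    rw [SetLike.mem_coe, mem_span_p_iff_coeff_zero_eq_zero, teichmuller_coeff_zero] at h
    simp [h] at hbK
  refine ⟨IsLocalization.mk' L (teichmuller p a) ⟨teichmuller p b, hbp⟩, ?_⟩
  rw [eq_div_iff hbK]
  simpa [mul_coeff_zero, teichmuller_coeff_zero] using
    congrArg (WittVector.coeff · 0) (localizationToWittVector_mk'_mul p B K L (teichmuller p a)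
      ⟨teichmuller p b, hbp⟩)

theorem mk_comp_localizationToWittVector_surjective [CharP K p] [PerfectRing K p] :
    Function.Surjective ((Ideal.Quotient.mk (span {(p : WittVector p K)})).comp
      (localizationToWittVector p B K L)) := by
  intro y
  obtain ⟨y, rfl⟩ := Ideal.Quotient.mk_surjective y
  obtain ⟨z, hz⟩ := exists_coeff_zero_localizationToWittVector_eq p B K L (y.coeff 0)
  refine ⟨z, Ideal.Quotient.eq.2 ?_⟩
  rw [← ker_constantCoeff, RingHom.sub_mem_ker_iff, constantCoeff_apply, constantCoeff_apply, hz]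

end Witt

theorem adic_completion_of_localization_iso_witt_of_fraction_field_general
    (p : ℕ) [Fact p.Prime] (B : Type*) [CommRing B] [CharP B p] [PerfectRing B p]
    (K : Type*) [Field K] [Algebra B K] [IsFractionRing B K]
    [(span {(p : WittVector p B)}).IsPrime]
    (L : Type*) [CommRing L] [Algebra (WittVector p B) L]
    [IsLocalization.AtPrime L (span {(p : WittVector p B)})] :
    ∃ e : AdicCompletion (span {(p : L)}) L ≃+* WittVector p K,
      ∀ x : WittVector p B, e (algebraMap L _ (algebraMap _ L x)) =
        WittVector.map (algebraMap B K) x := by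
  have : CharP K p := IsFractionRing.charP_of_isFractionRing B p
  have : PerfectRing K p :=
    perfectRing_of_isLocalization (nonZeroDivisors B) K (Fact.out : p.Prime).ne_zero
  let f := localizationToWittVector p B K L
  have hmap : (span {(p : L)}).map f = span {(p : WittVector p K)} := by
    rw [map_span, Set.image_singleton, map_natCast]
  have : IsAdicComplete ((span {(p : L)}).map f) (WittVector p K) :=
    hmap ▸ inferInstance
  have hf : Function.Bijective (adicCompletionLift (span {(p : L)}) f) := by
    refine adicCompletionLift_bijective ?_ ?_ ?_
    · rw [map_natCast]
      exact natCast_mem_nonZeroDivisors_wittVector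
    · rw [hmap]
      exact comap_localizationToWittVector_le p B K L
    · rw [hmap]
      exact mk_comp_localizationToWittVector_surjective p B K L
  exact ⟨RingEquiv.ofBijective _ hf, fun x ↦ by simp [f]⟩

/-- For a perfect `𝔽_p`-domain `B` with fraction field `K`, the `p`-adic
completion of the localization of `𝕎 B` at the prime ideal `(p)` is isomorphic to `𝕎 K`. -/
theorem adic_completion_of_localization_iso_witt_of_fraction_field
    (p : ℕ) [Fact p.Prime] (B : Type*) [CommRing B] [IsDomain B]
    [CharP B p] [PerfectRing B p] :
    (Ideal.span {(p : WittVector p B)}).IsPrime ∧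
    ∀ [hP : (Ideal.span {(p : WittVector p B)}).IsPrime],
      Nonempty
        (AdicCompletion
            (Ideal.span
              {(p : Localization.AtPrime (Ideal.span {(p : WittVector p B)}))})
            (Localization.AtPrime (Ideal.span {(p : WittVector p B)})) ≃+*
          WittVector p (FractionRing B)) :=
  ⟨isPrime_span_natCast_wittVector, fun {_} ↦
    ⟨(adic_completion_of_localization_iso_witt_of_fraction_field_general p B (FractionRing B)
      (Localization.AtPrime _)).choose⟩⟩
end

section
/- Let p be a prime, let k be a perfect field of characteristic p, let A = k[[z₁, …, z_d]] be a power series ring in d ≥ 1 variables over k, and let A^+ be the absolute integral closure of A. Then the sequence (p, [z₁], …, [z_d]) is a regular sequence on the ring of p-typical Witt vectors W(A^+), where [z_i] ∈ W(A^+) denotes the Teichmüller lift of the image of the variable z_i in A^+. -/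
noncomputable section

instance mvPowerSeriesIsDomain (k : Type*) [Field k] (d : ℕ) :
    IsDomain (MvPowerSeries (Fin d) k) :=
  NoZeroDivisors.to_isDomain _

/-!
Since `B = A⁺` is perfect, `p` is regular on `W(B)` and `W(B)/p = B`, so it suffices that
`(z₁, …, z_d)` is regular on `B`, which follows from flatness of `B` over the regular local ring
`A`.

Flatness is proved by induction on `dim A`. The localizations of `B` at the nonmaximal primes of
`A` are flat by induction, so for every finitely generated submodule `R ⊆ B` and every `x` in
the maximal ideal, some `x ^ k • (R → B)` factors through a finite free module. Let `xs` be a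
maximal weakly regular sequence on `A` in the maximal ideal. A relation showing that `xs` is not
weakly regular on `B` involves an element `b ∉ (xs)`; comparing its Frobenius powers,
Noetherianity yields a monic `p`-polynomial whose value at `b` lies in `(xs ^ q)`, and since
`p`-polynomials are additive and have preimages and roots in `B`, this forces `b ∈ (xs)`. Hence
`xs` is weakly regular on `B`, and `R → B` then factors through a finitely generated module on
which `xs` is weakly regular. Having finite projective dimension, such a module is free, so `B`
is flat.
-/

open Function RingTheory.Sequence Pointwise IsLocalRing TensorProduct

section WeaklyRegular

variable {R : Type*} [CommRing R]

section Exact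

variable {M₁ M₂ M₃ : Type*} [AddCommGroup M₁] [AddCommGroup M₂] [AddCommGroup M₃]
  [Module R M₁] [Module R M₂] [Module R M₃] {f : M₁ →ₗ[R] M₂} {g : M₂ →ₗ[R] M₃}

lemma quotSMulTop_map_injective_of_exact (hf : Injective f) (hfg : Exact f g) {r : R}
    (hr : IsSMulRegular M₃ r) : Injective (QuotSMulTop.map r f) := by
  have h0 : Exact (0 : M₁ →ₗ[R] M₁) f := (LinearMap.exact_zero_iff_injective M₁ f).2 hf
  have := QuotSMulTop.map_first_exact_on_four_term_exact_of_isSMulRegular_last h0 hfg hr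
  rwa [map_zero, LinearMap.exact_zero_iff_injective] at this

lemma isWeaklyRegular_middle_of_exact {rs : List R} (hf : Injective f) (hfg : Exact f g)
    (hg : Surjective g) (h₁ : IsWeaklyRegular M₁ rs) (h₃ : IsWeaklyRegular M₃ rs) :
    IsWeaklyRegular M₂ rs := by
  induction rs generalizing M₁ M₂ M₃ with
  | nil => exact .nil R M₂
  | cons r rs ih =>
    rw [isWeaklyRegular_cons_iff] at h₁ h₃ ⊢
    exact ⟨isSMulRegular_of_range_eq_ker hf (LinearMap.exact_iff.1 hfg).symm h₁.1 h₃.1,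
      ih (quotSMulTop_map_injective_of_exact hf hfg h₃.1) (QuotSMulTop.map_exact r hfg hg)
        (QuotSMulTop.map_surjective r hg) h₁.2 h₃.2⟩

lemma isWeaklyRegular_left_concat_of_exact {rs : List R} {x : R} (hf : Injective f)
    (hfg : Exact f g) (hg : Surjective g) (h₂ : IsWeaklyRegular M₂ (rs ++ [x]))
    (h₃ : IsWeaklyRegular M₃ rs) : IsWeaklyRegular M₁ (rs ++ [x]) := by
  induction rs generalizing M₁ M₂ M₃ with
  | nil =>
    rw [List.nil_append, isWeaklyRegular_singleton_iff] at h₂ ⊢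
    exact h₂.of_injective f hf
  | cons r rs ih =>
    rw [List.cons_append, isWeaklyRegular_cons_iff] at h₂ ⊢
    rw [isWeaklyRegular_cons_iff] at h₃
    exact ⟨h₂.1.of_injective f hf,
      ih (quotSMulTop_map_injective_of_exact hf hfg h₃.1) (QuotSMulTop.map_exact r hfg hg)
        (QuotSMulTop.map_surjective r hg) h₂.2 h₃.2⟩

lemma isWeaklyRegular_left_of_exact {rs : List R} (hf : Injective f) (hfg : Exact f g)
    (hg : Surjective g) (h₂ : IsWeaklyRegular M₂ rs) (h₃ : IsWeaklyRegular M₃ rs) :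
    IsWeaklyRegular M₁ rs := by
  obtain rfl | ⟨rs, x, rfl⟩ := rs.eq_nil_or_concat
  · exact .nil R M₁
  · rw [List.concat_eq_append] at h₂ h₃ ⊢
    exact isWeaklyRegular_left_concat_of_exact hf hfg hg h₂
      ((isWeaklyRegular_append_iff M₃ rs [x]).1 h₃).1

lemma mem_ofList_smul_top_of_exact {rs : List R} (hf : Injective f) (hfg : Exact f g)
    (hg : Surjective g) (h₃ : IsWeaklyRegular M₃ rs) {m : M₁}
    (hm : f m ∈ Ideal.ofList rs • (⊤ : Submodule R M₂)) :
    m ∈ Ideal.ofList rs • (⊤ : Submodule R M₁) := by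
  have h0 : Exact (0 : M₁ →ₗ[R] M₁) f := (LinearMap.exact_zero_iff_injective M₁ f).2 hf
  have hexact := map_first_exact_on_four_term_right_exact_of_isSMulRegular_last h0 hfg hg h₃
  obtain ⟨z, hz⟩ := (hexact (Submodule.Quotient.mk m)).1 <| by
    rwa [Submodule.mapQ_apply, Submodule.Quotient.mk_eq_zero]
  induction z using Submodule.Quotient.induction_on
  rwa [Submodule.mapQ_apply, LinearMap.zero_apply, Submodule.Quotient.mk_zero, eq_comm,
    Submodule.Quotient.mk_eq_zero] at hz

end Exact

variable {M : Type*} [AddCommGroup M] [Module R M]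

lemma quotSMulTop_mk_eq_zero_iff {r : R} {m : M} :
    (Submodule.Quotient.mk m : QuotSMulTop r M) = 0 ↔ ∃ w : M, r • w = m := by
  simp [Submodule.Quotient.mk_eq_zero, Submodule.mem_smul_pointwise_iff_exists]

lemma quotSMulTop_le_comap_lsmul_mul (x y : R) :
    x • (⊤ : Submodule R M) ≤ ((x * y) • ⊤ : Submodule R M).comap (LinearMap.lsmul R M y) := by
  rintro _ ⟨w, -, rfl⟩
  exact ⟨w, trivial, by simp [smul_smul]⟩

lemma mul_smul_top_le (x y : R) : (x * y) • (⊤ : Submodule R M) ≤ y • ⊤ := by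
  rintro _ ⟨w, -, rfl⟩
  exact ⟨x • w, trivial, by simp [smul_smul]⟩

-- The exact sequence `0 → M/xM → M/xyM → M/yM → 0` whose first map is multiplication by `y`.
lemma isWeaklyRegular_mul_cons {x y : R} {rs : List R} (hx : IsWeaklyRegular M (x :: rs))
    (hy : IsWeaklyRegular M (y :: rs)) : IsWeaklyRegular M (x * y :: rs) := by
  rw [isWeaklyRegular_cons_iff] at hx hy ⊢
  refine ⟨hx.1.mul hy.1, isWeaklyRegular_middle_of_exact
    (f := Submodule.mapQ _ _ (LinearMap.lsmul R M y) (quotSMulTop_le_comap_lsmul_mul x y))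
    (g := Submodule.factor (mul_smul_top_le x y)) ?_ ?_
    (Submodule.factor_surjective _) hx.2 hy.2⟩
  · rw [injective_iff_map_eq_zero]
    intro a ha
    induction a using Submodule.Quotient.induction_on with | _ a =>
    obtain ⟨w, hw⟩ := quotSMulTop_mk_eq_zero_iff.1 ha
    refine quotSMulTop_mk_eq_zero_iff.2 ⟨w, hy.1 ?_⟩
    simpa [smul_smul, mul_comm] using hw
  · intro b
    induction b using Submodule.Quotient.induction_on with | _ b =>
    constructor
    · intro hb
      obtain ⟨w, rfl⟩ := quotSMulTop_mk_eq_zero_iff.1 hb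
      exact ⟨Submodule.Quotient.mk w, rfl⟩
    · rintro ⟨a, ha⟩
      induction a using Submodule.Quotient.induction_on with | _ a =>
      rw [← ha]
      exact quotSMulTop_mk_eq_zero_iff.2 ⟨a, rfl⟩

lemma isWeaklyRegular_pow_cons {x : R} {rs : List R} (h : IsWeaklyRegular M (x :: rs)) {n : ℕ}
    (hn : n ≠ 0) : IsWeaklyRegular M (x ^ n :: rs) := by
  induction n, Nat.one_le_iff_ne_zero.2 hn using Nat.le_induction with
  | base => rwa [pow_one]
  | succ n hn' ih =>
    rw [pow_succ]
    exact isWeaklyRegular_mul_cons (ih (Nat.one_le_iff_ne_zero.1 hn')) h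

lemma isWeaklyRegular_map_pow {rs : List R} (h : IsWeaklyRegular M rs) {n : ℕ} (hn : n ≠ 0) :
    IsWeaklyRegular M (rs.map (· ^ n)) := by
  induction rs generalizing M with
  | nil => exact h
  | cons x rs ih =>
    have h' := isWeaklyRegular_pow_cons h hn
    rw [List.map_cons, isWeaklyRegular_cons_iff] at *
    exact ⟨h'.1, ih h'.2⟩

lemma isWeaklyRegular_prod {N : Type*} [AddCommGroup N] [Module R N] {rs : List R}
    (hM : IsWeaklyRegular M rs) (hN : IsWeaklyRegular N rs) : IsWeaklyRegular (M × N) rs :=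
  isWeaklyRegular_middle_of_exact LinearMap.inl_injective .inl_snd LinearMap.snd_surjective hM hN

lemma isWeaklyRegular_of_flat [Module.Flat R M] {rs : List R} (h : IsWeaklyRegular R rs) :
    IsWeaklyRegular M rs :=
  ((TensorProduct.rid R M).isWeaklyRegular_congr rs).1 h.isWeaklyRegular_lTensor

end WeaklyRegular

section Colon

variable {A : Type*} [CommRing A] {M : Type*} [AddCommGroup M] [Module A M]

lemma mem_ofList_cons_smul_top_iff {x : A} {xs : List A} {m : M} :
    m ∈ Ideal.ofList (x :: xs) • (⊤ : Submodule A M) ↔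
      ∃ b : M, m - x • b ∈ Ideal.ofList xs • (⊤ : Submodule A M) := by
  rw [Ideal.ofList_cons_smul, Submodule.mem_sup]
  constructor
  · rintro ⟨_, ⟨b, -, rfl⟩, z, hz, rfl⟩
    exact ⟨b, by simpa using hz⟩
  · rintro ⟨b, hb⟩
    exact ⟨x • b, ⟨b, trivial, rfl⟩, _, hb, add_sub_cancel _ _⟩

lemma quotSMulTop_mk_mem_ofList_smul_top_iff {x : A} {xs : List A} {m : M} :
    (Submodule.Quotient.mk m : QuotSMulTop x M) ∈ Ideal.ofList xs • (⊤ : Submodule A _) ↔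
      m ∈ Ideal.ofList (x :: xs) • (⊤ : Submodule A M) := by
  rw [← Submodule.Quotient.mk_eq_zero, ← Submodule.Quotient.mk_eq_zero (p := _ • _),
    ← (Submodule.quotOfListConsSMulTopEquivQuotSMulTopInner M x xs).map_eq_zero_iff]
  rfl

lemma prod_pow_smul_mem_ofList_map_pow_smul_top {xs : List A} {q Q : ℕ} (hqQ : q ≤ Q) {z : M}
    (hz : z ∈ Ideal.ofList (xs.map (· ^ q)) • (⊤ : Submodule A M)) :
    xs.prod ^ (Q - q) • z ∈ Ideal.ofList (xs.map (· ^ Q)) • (⊤ : Submodule A M) := by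
  have hideal : Ideal.ofList (xs.map (· ^ q)) ≤
      Submodule.comap (LinearMap.mulLeft A (xs.prod ^ (Q - q)))
        (Ideal.ofList (xs.map (· ^ Q))) := by
    refine Ideal.span_le.2 fun r hr ↦ ?_
    obtain ⟨x, hx, rfl⟩ := List.mem_map.1 hr
    have hxQ : x ^ Q ∈ Ideal.ofList (xs.map (· ^ Q)) :=
      Ideal.subset_span (List.mem_map_of_mem hx)
    refine Ideal.mem_of_dvd (Ideal.ofList _) ?_ hxQ
    calc x ^ Q = x ^ (Q - q) * x ^ q := by rw [← pow_add, Nat.sub_add_cancel hqQ]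
      _ ∣ xs.prod ^ (Q - q) * x ^ q := mul_dvd_mul_right (pow_dvd_pow_of_dvd (List.dvd_prod hx) _) _
  refine Submodule.smul_induction_on hz (fun r hr m _ ↦ ?_) fun x y hx hy ↦ ?_
  · rw [smul_smul]
    exact Submodule.smul_mem_smul (hideal hr) trivial
  · rw [smul_add]
    exact add_mem hx hy

lemma exists_mem_span_range_fin [IsNoetherian A M] (u : ℕ → M) :
    ∃ n, u n ∈ Submodule.span A (Set.range fun i : Fin n ↦ u i) := by
  let S : ℕ →o Submodule A M :=
    { toFun := fun n ↦ Submodule.span A (Set.range fun i : Fin n ↦ u i)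
      monotone' := fun a b hab ↦ Submodule.span_mono <| by
        rintro _ ⟨i, rfl⟩
        exact ⟨i.castLE hab, rfl⟩ }
  obtain ⟨n, hn⟩ := monotone_stabilizes_iff_noetherian.2 ‹IsNoetherian A M› S
  have : u n ∈ S (n + 1) := Submodule.subset_span ⟨Fin.last n, rfl⟩
  exact ⟨n, by rwa [← hn (n + 1) n.le_succ] at this⟩

variable [IsLocalRing A] [IsNoetherian A M]

lemma isSMulRegular_quotient_ofList_of_cons {x : A} {xs : List A}
    (hxs : ∀ r ∈ x :: xs, r ∈ maximalIdeal A) (h : IsWeaklyRegular M (x :: xs)) :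
    IsSMulRegular (M ⧸ Ideal.ofList xs • (⊤ : Submodule A M)) x := by
  have := isWeaklyRegular_of_perm_of_subset_maximalIdeal h
    (List.perm_append_singleton x xs).symm hxs
  rw [isWeaklyRegular_append_iff, isWeaklyRegular_singleton_iff] at this
  exact this.2

lemma exists_sub_prod_pow_smul_mem {xs : List A} (hxs : ∀ x ∈ xs, x ∈ maximalIdeal A)
    (h : IsWeaklyRegular M xs) {n q : ℕ} (hn : n ≠ 0) (hnq : n ≤ q) {w : M}
    (hw : ∀ x ∈ xs, x ^ n • w ∈ Ideal.ofList (xs.map (· ^ q)) • (⊤ : Submodule A M)) :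
    ∃ u : M, w - xs.prod ^ (q - n) • u ∈
      Ideal.ofList (xs.map (· ^ q)) • (⊤ : Submodule A M) := by
  induction xs generalizing M with
  | nil => exact ⟨w, by simp⟩
  | cons x xs ih =>
    obtain ⟨hx, hxs'⟩ := List.forall_mem_cons.1 hxs
    set I := Ideal.ofList (xs.map (· ^ q)) • (⊤ : Submodule A M) with hI
    have hreg : IsSMulRegular (M ⧸ I) x := by
      refine isSMulRegular_quotient_ofList_of_cons (List.forall_mem_cons.2 ⟨hx, fun r hr ↦ ?_⟩) ?_
      · obtain ⟨y, hy, rfl⟩ := List.mem_map.1 hr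
        exact Ideal.pow_mem_of_mem _ (hxs' y hy) _ (by omega)
      · rw [isWeaklyRegular_cons_iff] at h ⊢
        exact ⟨h.1, isWeaklyRegular_map_pow h.2 (by omega)⟩
    have hcancel (k : ℕ) {m : M} (hm : x ^ k • m ∈ I) : m ∈ I :=
      mem_of_isSMulRegular_quotient_of_smul_mem (hreg.pow k) hm
    have hxq : x ^ q = x ^ n * x ^ (q - n) := by rw [← pow_add, Nat.add_sub_cancel' hnq]
    obtain ⟨b, hb⟩ := mem_ofList_cons_smul_top_iff.1 (hw x List.mem_cons_self)
    have hwb : w - x ^ (q - n) • b ∈ I := hcancel n (by rwa [smul_sub, smul_smul, ← hxq])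
    have hb' (y : A) (hy : y ∈ xs) : ∃ c, y ^ n • b - x ^ n • c ∈ I := by
      obtain ⟨c, hc⟩ := mem_ofList_cons_smul_top_iff.1 (hw y (List.mem_cons_of_mem x hy))
      refine ⟨c, hcancel (q - n) ?_⟩
      convert I.sub_mem hc (I.smul_mem (y ^ n) hwb) using 1
      simp only [hxq]
      module
    obtain ⟨u, hu⟩ := ih (M := QuotSMulTop (x ^ n) M) (w := Submodule.Quotient.mk b) hxs'
      ((isWeaklyRegular_cons_iff _ _ _).1 (isWeaklyRegular_pow_cons h hn)).2 fun y hy ↦ by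
        rw [← Submodule.Quotient.mk_smul, quotSMulTop_mk_mem_ofList_smul_top_iff,
          mem_ofList_cons_smul_top_iff]
        exact hb' y hy
    induction u using Submodule.Quotient.induction_on with | _ u =>
    rw [← Submodule.Quotient.mk_smul, ← Submodule.Quotient.mk_sub,
      quotSMulTop_mk_mem_ofList_smul_top_iff, mem_ofList_cons_smul_top_iff] at hu
    obtain ⟨d, hd⟩ := hu
    refine ⟨u, mem_ofList_cons_smul_top_iff.2 ⟨d, ?_⟩⟩
    convert I.add_mem hwb (I.smul_mem (x ^ (q - n)) hd) using 1
    simp only [hxq, List.prod_cons, mul_pow]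
    module

-- Write `w e = πᵠ⁽ᵉ⁾⁻ᵠ⁽⁰⁾ u e` modulo `(x^{q e})M`, where `π = xs.prod`, and use that finitely many
-- of the `u e` generate the next one.
lemma exists_sub_sum_mem_ofList_map_pow_smul_top {xs : List A}
    (hxs : ∀ x ∈ xs, x ∈ maximalIdeal A) (h : IsWeaklyRegular M xs) {q : ℕ → ℕ} (hq : Monotone q)
    (hq₀ : q 0 ≠ 0) {w : ℕ → M} (hw : ∀ e, ∀ x ∈ xs,
      x ^ q 0 • w e ∈ Ideal.ofList (xs.map (· ^ q e)) • (⊤ : Submodule A M)) :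
    ∃ (E : ℕ) (a : Fin E → A), w E - ∑ i, (a i * xs.prod ^ (q E - q i)) • w i ∈
      Ideal.ofList (xs.map (· ^ q E)) • (⊤ : Submodule A M) := by
  choose u hu using fun e ↦ exists_sub_prod_pow_smul_mem hxs h hq₀ (hq e.zero_le) (hw e)
  obtain ⟨E, hE⟩ := exists_mem_span_range_fin (A := A) u
  obtain ⟨a, ha⟩ := (Submodule.mem_span_range_iff_exists_fun A).1 hE
  refine ⟨E, a, ?_⟩
  have hi (i : Fin E) := Submodule.smul_mem _ (a i) <|
    prod_pow_smul_mem_ofList_map_pow_smul_top (hq i.is_lt.le) (hu i)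
  have hsum : xs.prod ^ (q E - q 0) • u E =
      ∑ i : Fin E, (a i * xs.prod ^ (q E - q i)) • w i -
        ∑ i : Fin E, a i • xs.prod ^ (q E - q i) • (w i - xs.prod ^ (q i - q 0) • u i) := by
    rw [← ha, Finset.smul_sum, ← Finset.sum_sub_distrib]
    refine Finset.sum_congr rfl fun i _ ↦ ?_
    rw [← tsub_add_tsub_cancel (hq i.is_lt.le) (hq (Nat.zero_le i)), pow_add]
    module
  convert sub_mem (hu E) (sum_mem fun i (_ : i ∈ Finset.univ) ↦ hi i) using 1
  rw [hsum]
  abel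

end Colon

section PPolynomial

open Polynomial

/-- A *`p`-polynomial*: a polynomial in which only monomials `X ^ p ^ n` occur. In characteristic
`p` its evaluation map is additive. -/
def IsPPolynomial (p : ℕ) {B : Type*} [Semiring B] (P : B[X]) : Prop :=
  ∀ i ∈ P.support, ∃ n, i = p ^ n

variable {p : ℕ} {B : Type*} [CommRing B]

lemma isPPolynomial_X_pow_sub_sum_C_mul_X_pow (n E : ℕ) (a : Fin E → B) :
    IsPPolynomial p (X ^ p ^ (n + E) - ∑ i : Fin E, C (a i) * X ^ p ^ (n + i : ℕ)) := by
  intro j hj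
  by_contra! hne
  simp [coeff_X_pow, hne] at hj

lemma IsPPolynomial.scaleRoots {P : B[X]} (hP : IsPPolynomial p P) (s : B) :
    IsPPolynomial p (P.scaleRoots s) :=
  fun i hi ↦ hP i (support_scaleRoots_le P s hi)

lemma IsPPolynomial.eval_add [Fact p.Prime] [CharP B p] {P : B[X]} (hP : IsPPolynomial p P)
    (x y : B) : P.eval (x + y) = P.eval x + P.eval y := by
  simp only [eval_eq_sum, Polynomial.sum_def, ← Finset.sum_add_distrib]
  refine Finset.sum_congr rfl fun i hi ↦ ?_
  obtain ⟨n, rfl⟩ := hP i hi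
  rw [add_pow_char_pow, mul_add]

lemma IsPPolynomial.eval_zero {P : B[X]} (hp : p ≠ 0) (hP : IsPPolynomial p P) :
    P.eval 0 = 0 := by
  rw [← coeff_zero_eq_eval_zero]
  by_contra h
  obtain ⟨n, hn⟩ := hP 0 (mem_support_iff.2 h)
  exact pow_ne_zero n hp hn.symm

end PPolynomial

section XPowSubSum

open Polynomial

variable {B : Type*} [CommRing B] {E N : ℕ} {n : Fin E → ℕ} (a : Fin E → B)

lemma degree_sum_C_mul_X_pow_lt (hn : ∀ i, n i < N) :
    degree (∑ i, C (a i) * X ^ n i) < N := by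
  refine (degree_sum_le _ _).trans_lt ((Finset.sup_lt_iff (WithBot.bot_lt_coe _)).2 fun i _ ↦ ?_)
  exact (degree_C_mul_X_pow_le _ _).trans_lt (WithBot.coe_lt_coe.2 (hn i))

lemma monic_X_pow_sub_sum_C_mul_X_pow (hn : ∀ i, n i < N) :
    Monic (X ^ N - ∑ i, C (a i) * X ^ n i) :=
  monic_X_pow_sub (degree_sum_C_mul_X_pow_lt a hn)

variable [Nontrivial B]

lemma natDegree_X_pow_sub_sum_C_mul_X_pow (hn : ∀ i, n i < N) :
    natDegree (X ^ N - ∑ i, C (a i) * X ^ n i) = N := by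
  rw [natDegree_eq_of_degree_eq (degree_sub_eq_left_of_degree_lt
    ((degree_sum_C_mul_X_pow_lt a hn).trans_eq (degree_X_pow N).symm)), natDegree_X_pow]

lemma scaleRoots_X_pow_sub_sum_C_mul_X_pow (hn : ∀ i, n i < N) (s : B) :
    scaleRoots (X ^ N - ∑ i, C (a i) * X ^ n i) s =
      X ^ N - ∑ i, C (a i * s ^ (N - n i)) * X ^ n i := by
  ext j
  simp only [coeff_scaleRoots, natDegree_X_pow_sub_sum_C_mul_X_pow a hn, coeff_sub, coeff_X_pow,
    finsetSum_coeff, coeff_C_mul, sub_mul, Finset.sum_mul]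
  congr 1
  · split_ifs with h <;> simp [h]
  · refine Finset.sum_congr rfl fun i _ ↦ ?_
    split_ifs with h <;> simp [h]

end XPowSubSum

section AbsolutelyIntegrallyClosed

open Polynomial

/-- A ring is *absolutely integrally closed* if every monic polynomial over it is a product of
linear factors. -/
class IsAbsolutelyIntegrallyClosed (B : Type*) [CommRing B] : Prop where
  splits_of_monic : ∀ P : B[X], P.Monic → P.Splits

instance isAbsolutelyIntegrallyClosed_integralClosure (A Ω : Type*) [CommRing A] [Field Ω]
    [IsAlgClosed Ω] [Algebra A Ω] : IsAbsolutelyIntegrallyClosed (integralClosure A Ω) where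
  splits_of_monic P hP := by
    refine (IsAlgClosed.splits (P.map (algebraMap _ Ω))).of_splits_map_of_injective
      (FaithfulSMul.algebraMap_injective _ Ω) fun x hx ↦ ?_
    rw [mem_roots (hP.map _).ne_zero, IsRoot, eval_map] at hx
    exact IsIntegrallyClosedIn.algebraMap_eq_of_integral ⟨P, hP, hx⟩

lemma isAbsolutelyIntegrallyClosed_of_isLocalization {B : Type*} (B' : Type*) [CommRing B]
    [CommRing B'] [Algebra B B'] (S : Submonoid B) [IsLocalization S B']
    [IsAbsolutelyIntegrallyClosed B] : IsAbsolutelyIntegrallyClosed B' where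
  splits_of_monic P hP := by
    obtain ⟨s, hs⟩ : ∃ s : S, P.scaleRoots (algebraMap B B' s) ∈ lifts (algebraMap B B') :=
      ⟨_, IsLocalization.scaleRoots_commonDenom_mem_lifts S P (by
        rw [hP.leadingCoeff]
        exact one_mem _)⟩
    obtain ⟨Q, hQP, -, hQ⟩ :=
      lifts_and_natDegree_eq_and_monic hs ((monic_scaleRoots_iff _).2 hP)
    have hsplits : (P.scaleRoots (algebraMap B B' s)).Splits :=
      hQP ▸ (IsAbsolutelyIntegrallyClosed.splits_of_monic Q hQ).map _
    obtain ⟨u, hu⟩ := (IsLocalization.map_units B' s).exists_right_inv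
    have := hsplits.scaleRoots u
    rwa [← scaleRoots_mul, hu, scaleRoots_one] at this

variable {B : Type*} [CommRing B] [IsAbsolutelyIntegrallyClosed B] {P : B[X]}

lemma exists_eval_eq_of_monic (hP : P.Monic) (hdeg : P.natDegree ≠ 0) (b : B) :
    ∃ x, P.eval x = b := by
  have hdeg' : (C b).degree < P.degree :=
    degree_C_le.trans_lt (natDegree_pos_iff_degree_pos.1 (Nat.pos_of_ne_zero hdeg))
  obtain ⟨x, hx⟩ := (IsAbsolutelyIntegrallyClosed.splits_of_monic _
    (hP.sub_of_left hdeg')).exists_eval_eq_zero <| by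
      rw [degree_sub_eq_left_of_degree_lt hdeg']
      exact (natDegree_pos_iff_degree_pos.1 (Nat.pos_of_ne_zero hdeg)).ne'
  exact ⟨x, by simpa [sub_eq_zero] using hx⟩

variable {p : ℕ} [Fact p.Prime] [CharP B p] {S : Set B} {s : B}

lemma exists_mem_span_eval_scaleRoots_eq (hP : P.Monic) (hPp : IsPPolynomial p P)
    (hdeg : P.natDegree ≠ 0) (hS : ∀ x ∈ S, x ∣ s) {z : B}
    (hz : z ∈ Ideal.span ((· ^ P.natDegree) '' S)) :
    ∃ t ∈ Ideal.span S, (P.scaleRoots s).eval t = z := by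
  induction hz using Submodule.closure_induction with
  | zero =>
    exact ⟨0, zero_mem _, (hPp.scaleRoots s).eval_zero (Fact.out : p.Prime).ne_zero⟩
  | add z₁ z₂ _ _ h₁ h₂ =>
    obtain ⟨t₁, ht₁, rfl⟩ := h₁
    obtain ⟨t₂, ht₂, rfl⟩ := h₂
    exact ⟨t₁ + t₂, add_mem ht₁ ht₂, (hPp.scaleRoots s).eval_add t₁ t₂⟩
  | smul_mem b y hy =>
    obtain ⟨x, hx, rfl⟩ := hy
    obtain ⟨c, rfl⟩ := hS x hx
    obtain ⟨t, ht⟩ := exists_eval_eq_of_monic ((monic_scaleRoots_iff c).2 hP)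
      (by rwa [natDegree_scaleRoots]) b
    refine ⟨x * t, Ideal.mul_mem_right t _ (Ideal.subset_span hx), ?_⟩
    rw [mul_comm x c, scaleRoots_mul, ← natDegree_scaleRoots P c, scaleRoots_eval_mul, ht,
      natDegree_scaleRoots, smul_eq_mul, mul_comm]

variable [IsDomain B]

lemma dvd_of_eval_scaleRoots_eq_zero (hP : P.Monic) {w : B}
    (h : (P.scaleRoots s).eval w = 0) : s ∣ w := by
  rw [(IsAbsolutelyIntegrallyClosed.splits_of_monic P hP).eq_prod_roots_of_monic hP] at h
  generalize P.roots = m at h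
  induction m using Multiset.induction with
  | empty => simp at h
  | cons a m ih =>
    rw [Multiset.map_cons, Multiset.prod_cons, mul_scaleRoots_of_noZeroDivisors,
      X_sub_C_scaleRoots, eval_mul, mul_eq_zero] at h
    obtain h | h := h
    · exact ⟨a, by simpa [sub_eq_zero, mul_comm] using h⟩
    · exact ih h

-- Subtracting from `r` a preimage of its value in `(S)` leaves a root of `P.scaleRoots s`, which is
-- a multiple of `s`.
lemma mem_span_of_eval_scaleRoots_mem (hP : P.Monic) (hPp : IsPPolynomial p P)
    (hdeg : P.natDegree ≠ 0) (hS : ∀ x ∈ S, x ∣ s) (hsS : s ∈ Ideal.span S) {r : B}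
    (hr : (P.scaleRoots s).eval r ∈ Ideal.span ((· ^ P.natDegree) '' S)) :
    r ∈ Ideal.span S := by
  obtain ⟨t, ht, htr⟩ := exists_mem_span_eval_scaleRoots_eq hP hPp hdeg hS hr
  have hroot : (P.scaleRoots s).eval (r - t) = 0 := by
    have := (hPp.scaleRoots s).eval_add (r - t) t
    rwa [sub_add_cancel, htr, right_eq_add] at this
  rw [← sub_add_cancel r t]
  exact add_mem (Ideal.mem_of_dvd _ (dvd_of_eval_scaleRoots_eq_zero hP hroot) hsS) ht

end AbsolutelyIntegrallyClosed

section RegularFactorization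

universe u

section Division

variable {A : Type*} [CommRing A] {M N P : Type*} [AddCommGroup M] [AddCommGroup N]
  [AddCommGroup P] [Module A M] [Module A N] [Module A P]

lemma exists_linearMap_comp_eq_of_ker_le {f : M →ₗ[A] P} (hf : Surjective f) {g : M →ₗ[A] N}
    (h : LinearMap.ker f ≤ LinearMap.ker g) : ∃ σ : P →ₗ[A] N, σ ∘ₗ f = g := by
  refine ⟨(LinearMap.ker f).liftQ g h ∘ₗ (f.quotKerEquivOfSurjective hf).symm, ?_⟩
  ext m
  have : (f.quotKerEquivOfSurjective hf).symm (f m) = Submodule.Quotient.mk m :=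
    (LinearEquiv.symm_apply_eq _).2 rfl
  simp [this]

lemma exists_linearMap_smul_eq {c : A} (hc : IsSMulRegular N c) {g : M →ₗ[A] N}
    (h : (c • (⊤ : Submodule A N)).mkQ ∘ₗ g = 0) : ∃ β : M →ₗ[A] N, c • β = g := by
  have h' (m : M) : ∃ n, c • n = g m := quotSMulTop_mk_eq_zero_iff.1 (LinearMap.congr_fun h m)
  choose β hβ using h'
  refine ⟨⟨⟨β, fun x y ↦ hc ?_⟩, fun a x ↦ hc ?_⟩, LinearMap.ext hβ⟩
  · simp only [smul_add, hβ, map_add]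
  · simp only [RingHom.id_apply, smul_comm c a, hβ, map_smul]

lemma exists_fg_lift_of_quotSMulTop [IsNoetherianRing A] {c : A} (hc : IsSMulRegular N c)
    {T : Submodule A (QuotSMulTop c N)} (hT : T.FG) :
    ∃ (R : Submodule A N) (σ : T →ₗ[A] QuotSMulTop c R),
      R.FG ∧ QuotSMulTop.map c R.subtype ∘ₗ σ = T.subtype := by
  obtain ⟨n, f, rfl⟩ := (Submodule.fg_iff_exists_fin_linearMap _ _).1 hT
  obtain ⟨g, hg⟩ := Module.projective_lifting_property (c • (⊤ : Submodule A N)).mkQ f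
    (Submodule.mkQ_surjective _)
  let R := (LinearMap.range g).comap (LinearMap.lsmul A N c)
  have hR : R.FG := by
    rw [← Module.Finite.iff_fg]
    exact Module.Finite.of_injective
      ((LinearMap.lsmul A N c).restrict (p := R) (q := LinearMap.range g) fun _ h ↦ h)
      fun x y hxy ↦ Subtype.ext (hc (congrArg Subtype.val hxy))
  let g' : (Fin n → A) →ₗ[A] R := g.codRestrict R fun v ↦ ⟨c • v, map_smul g c v⟩
  obtain ⟨σ, hσ⟩ := exists_linearMap_comp_eq_of_ker_le f.surjective_rangeRestrict
    (g := (c • (⊤ : Submodule A R)).mkQ ∘ₗ g') fun v hv ↦ by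
      have hgv : (Submodule.Quotient.mk (g v) : QuotSMulTop c N) = 0 :=
        (LinearMap.congr_fun hg v).trans (congrArg Subtype.val hv)
      obtain ⟨w, hw⟩ := quotSMulTop_mk_eq_zero_iff.1 hgv
      exact quotSMulTop_mk_eq_zero_iff.2 ⟨⟨w, v, hw.symm⟩, Subtype.ext hw⟩
  refine ⟨R, σ, hR, LinearMap.ext ?_⟩
  rintro ⟨_, v, rfl⟩
  have hσv : σ (f.rangeRestrict v) = Submodule.Quotient.mk (g' v) := LinearMap.congr_fun hσ v
  exact (congrArg (QuotSMulTop.map c R.subtype) hσv).trans (LinearMap.congr_fun hg v)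

end Division

variable {A : Type u} [CommRing A] {M N : Type*} [AddCommGroup M] [AddCommGroup N] [Module A M]
  [Module A N]

/-- The linear map `f` factors through a free module of finite rank. -/
def FactorsThroughFree (f : M →ₗ[A] N) : Prop :=
  ∃ (n : ℕ) (φ : M →ₗ[A] Fin n → A) (ψ : (Fin n → A) →ₗ[A] N), ψ ∘ₗ φ = f

/-- The linear map `f` factors through a finitely generated module on which the sequence `xs` is
weakly regular. -/
def FactorsThroughRegular (xs : List A) (f : M →ₗ[A] N) : Prop :=
  ∃ (C : Type u) (_ : AddCommGroup C) (_ : Module A C) (φ : M →ₗ[A] C) (ψ : C →ₗ[A] N),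
    Module.Finite A C ∧ IsWeaklyRegular C xs ∧ ψ ∘ₗ φ = f

lemma FactorsThroughFree.smul {f : M →ₗ[A] N} (hf : FactorsThroughFree f) (a : A) :
    FactorsThroughFree (a • f) := by
  obtain ⟨n, φ, ψ, rfl⟩ := hf
  exact ⟨n, φ, a • ψ, LinearMap.smul_comp a ψ φ⟩

lemma FactorsThroughFree.factorsThroughRegular {xs : List A} (hxs : IsWeaklyRegular A xs)
    {f : M →ₗ[A] N} (hf : FactorsThroughFree f) : FactorsThroughRegular xs f := by
  obtain ⟨n, φ, ψ, h⟩ := hf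
  exact ⟨Fin n → A, _, _, φ, ψ, inferInstance, isWeaklyRegular_of_flat hxs, h⟩

lemma factorsThroughRegular_nil [Module.Finite A M] (f : M →ₗ[A] N) :
    FactorsThroughRegular [] f := by
  obtain ⟨n, π, hπ⟩ := Module.Finite.exists_fin' A M
  let e := π.quotKerEquivOfSurjective hπ
  exact ⟨(Fin n → A) ⧸ LinearMap.ker π, _, _, e.symm, f ∘ₗ e, inferInstance, .nil A _, by
    ext m; simp⟩

lemma FactorsThroughRegular.pow_cons {x : A} {xs : List A} {f : M →ₗ[A] N}
    (h : FactorsThroughRegular (x :: xs) f) {n : ℕ} (hn : n ≠ 0) :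
    FactorsThroughRegular (x ^ n :: xs) f := by
  obtain ⟨C, _, _, φ, ψ, hC, hreg, hφψ⟩ := h
  exact ⟨C, _, _, φ, ψ, hC, isWeaklyRegular_pow_cons hreg hn, hφψ⟩

lemma exists_fg_factorsThroughRegular_quotSMulTop [IsNoetherianRing A] {c : A}
    (hc : IsSMulRegular N c) {T : Submodule A (QuotSMulTop c N)} (hT : T.FG) :
    ∃ R : Submodule A N, R.FG ∧ ∀ (x : A) (xs : List A),
      FactorsThroughRegular (c :: xs) (x • R.subtype) →
        FactorsThroughRegular xs (x • T.subtype) := by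
  obtain ⟨R, σ, hR, hσ⟩ := exists_fg_lift_of_quotSMulTop hc hT
  refine ⟨R, hR, fun x xs h ↦ ?_⟩
  obtain ⟨G, _, _, φ, ψ, _, hG, hφψ⟩ := h
  refine ⟨QuotSMulTop c G, _, _, QuotSMulTop.map c φ ∘ₗ σ, QuotSMulTop.map c ψ, inferInstance,
    ((isWeaklyRegular_cons_iff _ _ _).1 hG).2, ?_⟩
  rw [← LinearMap.comp_assoc, ← QuotSMulTop.map_comp, hφψ, map_smul, LinearMap.smul_comp, hσ]

variable [IsLocalRing A] [IsNoetherianRing A]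

lemma isWeaklyRegular_ker_cons {G C : Type*} [AddCommGroup G] [AddCommGroup C] [Module A G]
    [Module A C] [Module.Finite A G] {y : A} {xs : List A}
    (hxs : ∀ x ∈ y :: xs, x ∈ maximalIdeal A) (hG : IsWeaklyRegular G (y :: xs))
    (hC : IsWeaklyRegular C xs) {χ : G →ₗ[A] C} (hχ : Surjective χ) :
    IsWeaklyRegular (LinearMap.ker χ) (y :: xs) := by
  have hperm := (List.perm_append_singleton y xs).symm
  refine isWeaklyRegular_of_perm_of_subset_maximalIdeal
    (isWeaklyRegular_left_concat_of_exact (Submodule.injective_subtype _)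
      (LinearMap.exact_subtype_ker_map χ) hχ
      (isWeaklyRegular_of_perm_of_subset_maximalIdeal hG hperm hxs) hC) hperm.symm ?_
  exact fun x hx ↦ hxs x (hperm.mem_iff.2 hx)

-- The module through which `f` factors is the kernel of a surjection `G × F → C` with `F` free,
-- where `G → C → N / cN` is a factorization of the reduction of `ψ`.
lemma factorsThroughRegular_cons_of_range {G : Type u} [AddCommGroup G] [Module A G]
    [Module.Finite A G] {y c : A} {xs : List A} (hxs : ∀ x ∈ y :: xs, x ∈ maximalIdeal A)
    (hA : IsWeaklyRegular A (y :: xs)) (hG : IsWeaklyRegular G (y :: xs))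
    (hc : IsSMulRegular N c) {f : M →ₗ[A] N} {φ : M →ₗ[A] G} {ψ : G →ₗ[A] N}
    (hφψ : ψ ∘ₗ φ = c • f)
    (h : FactorsThroughRegular xs
      (LinearMap.range ((c • (⊤ : Submodule A N)).mkQ ∘ₗ ψ)).subtype) :
    FactorsThroughRegular (y :: xs) f := by
  set ρ := (c • (⊤ : Submodule A N)).mkQ ∘ₗ ψ with hρ
  obtain ⟨C, _, _, φ', ψ', _, hC, hφψ'⟩ := h
  obtain ⟨n, π, hπ⟩ := Module.Finite.exists_fin' A C
  obtain ⟨l, hl⟩ := Module.projective_lifting_property (c • (⊤ : Submodule A N)).mkQ (ψ' ∘ₗ π)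
    (Submodule.mkQ_surjective _)
  let χ : G × (Fin n → A) →ₗ[A] C := (φ' ∘ₗ ρ.rangeRestrict).coprod π
  have hχ : Surjective χ := fun z ↦ by
    obtain ⟨v, rfl⟩ := hπ z
    exact ⟨(0, v), by simp [χ]⟩
  have hχψ : (c • (⊤ : Submodule A N)).mkQ ∘ₗ ψ.coprod l = ψ' ∘ₗ χ := by
    rw [LinearMap.comp_coprod, LinearMap.comp_coprod, hl, ← hρ, ← LinearMap.comp_assoc, hφψ']
    rfl
  obtain ⟨β, hβ⟩ := exists_linearMap_smul_eq hc (g := ψ.coprod l ∘ₗ (LinearMap.ker χ).subtype) <| by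
    rw [← LinearMap.comp_assoc, hχψ, LinearMap.comp_assoc, LinearMap.comp_ker_subtype,
      LinearMap.comp_zero]
  have hker (m : M) : ρ.rangeRestrict (φ m) = 0 := Subtype.ext <|
    quotSMulTop_mk_eq_zero_iff.2 ⟨f m, (LinearMap.congr_fun hφψ m).symm⟩
  let α : M →ₗ[A] LinearMap.ker χ := (LinearMap.inl A G (Fin n → A) ∘ₗ φ).codRestrict _ fun m ↦ by
    simp [χ, hker]
  refine ⟨LinearMap.ker χ, _, _, α, β, inferInstance,
    isWeaklyRegular_ker_cons hxs (isWeaklyRegular_prod hG (isWeaklyRegular_of_flat hA)) hC hχ, ?_⟩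
  ext m
  apply hc
  calc c • β (α m) = ψ.coprod l (α m) := LinearMap.congr_fun hβ (α m)
    _ = ψ (φ m) + l 0 := rfl
    _ = ψ (φ m) := by rw [map_zero, add_zero]
    _ = c • f m := LinearMap.congr_fun hφψ m

theorem factorsThroughRegular_subtype {xs : List A} (hxs : ∀ x ∈ xs, x ∈ maximalIdeal A)
    (hA : IsWeaklyRegular A xs) (hN : IsWeaklyRegular N xs)
    (h : ∀ R : Submodule A N, R.FG → ∀ x ∈ xs, ∃ k, FactorsThroughRegular xs (x ^ k • R.subtype))
    {R : Submodule A N} (hR : R.FG) : FactorsThroughRegular xs R.subtype := by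
  induction xs generalizing N with
  | nil =>
    have := Module.Finite.iff_fg.2 hR
    exact factorsThroughRegular_nil _
  | cons y xs ih =>
    obtain ⟨k, G, _, _, φ, ψ, _, hG, hφψ⟩ := h R hR y List.mem_cons_self
    have hNc := (isWeaklyRegular_cons_iff _ _ _).1 (isWeaklyRegular_pow_cons hN k.succ_ne_zero)
    have hAxs : IsWeaklyRegular A xs :=
      ((isWeaklyRegular_append_iff A xs [y]).1 (isWeaklyRegular_of_perm_of_subset_maximalIdeal hA
        (List.perm_append_singleton y xs).symm hxs)).1
    refine factorsThroughRegular_cons_of_range hxs hA hG hNc.1 (φ := φ) (ψ := y • ψ)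
      (by rw [LinearMap.smul_comp, hφψ, smul_smul, pow_succ']) ?_
    refine ih (List.forall_mem_cons.1 hxs).2 hAxs hNc.2 (fun T hT x hx ↦ ?_)
      (Module.Finite.iff_fg.1 inferInstance)
    obtain ⟨R', hR', hfac⟩ := exists_fg_factorsThroughRegular_quotSMulTop hNc.1 hT
    obtain ⟨j, hj⟩ := h R' hR' x (List.mem_cons_of_mem y hx)
    exact ⟨j, hfac _ _ (hj.pow_cons k.succ_ne_zero)⟩

end RegularFactorization

section FrobeniusTrick

lemma mem_ofList_smul_top_iff_mem_ofList_map {A B : Type*} [CommRing A] [CommRing B] [Algebra A B]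
    {xs : List A} {b : B} :
    b ∈ Ideal.ofList xs • (⊤ : Submodule A B) ↔
      b ∈ Ideal.ofList (xs.map (algebraMap A B)) := by
  rw [Ideal.smul_top_eq_map, Submodule.restrictScalars_mem, Ideal.map_ofList]

lemma pow_char_pow_mem_ofList_smul_top {A B : Type*} [CommRing A] [CommRing B] [Algebra A B]
    {p : ℕ} [Fact p.Prime] [CharP B p] (e : ℕ) {xs : List A} {b : B}
    (hb : b ∈ Ideal.ofList xs • (⊤ : Submodule A B)) :
    b ^ p ^ e ∈ Ideal.ofList (xs.map (· ^ p ^ e)) • (⊤ : Submodule A B) := by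
  rw [mem_ofList_smul_top_iff_mem_ofList_map] at hb ⊢
  have := Ideal.mem_map_of_mem (iterateFrobenius B p e) hb
  rw [Ideal.map_ofList] at this
  simpa [iterateFrobenius_def, Function.comp_def] using this

lemma exists_finite_forall_mem_smul {A N : Type*} [CommRing A] [AddCommGroup N] [Module A N]
    {I : Ideal A} {m : N} (hm : m ∈ I • (⊤ : Submodule A N)) :
    ∃ S : Set N, S.Finite ∧ ∀ R : Submodule A N, S ⊆ R → m ∈ I • R := by
  refine Submodule.smul_induction_on hm (fun a ha n _ ↦ ?_) fun m₁ m₂ h₁ h₂ ↦ ?_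
  · exact ⟨{n}, Set.finite_singleton n,
      fun R hR ↦ Submodule.smul_mem_smul ha (Set.singleton_subset_iff.1 hR)⟩
  · obtain ⟨S₁, hS₁, h₁⟩ := h₁
    obtain ⟨S₂, hS₂, h₂⟩ := h₂
    refine ⟨S₁ ∪ S₂, hS₁.union hS₂, fun R hR ↦ ?_⟩
    exact add_mem (h₁ R (Set.subset_union_left.trans hR)) (h₂ R (Set.subset_union_right.trans hR))

lemma exists_subalgebra_finite_mem_smul_top {A B : Type*} [CommRing A] [CommRing B] [Algebra A B]
    [Algebra.IsIntegral A B] {I : Ideal A} {y : A} {b : B}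
    (hb : y • b ∈ I • (⊤ : Submodule A B)) :
    ∃ (R : Subalgebra A B) (r : R), Module.Finite A R ∧ (r : B) = b ∧
      y • r ∈ I • (⊤ : Submodule A R) := by
  obtain ⟨S, hS, hI⟩ := exists_finite_forall_mem_smul hb
  let R := Algebra.adjoin A (insert b S)
  have hR : (Subalgebra.toSubmodule R).FG :=
    fg_adjoin_of_finite (hS.insert b) fun x _ ↦ Algebra.IsIntegral.isIntegral x
  refine ⟨R, ⟨b, Algebra.subset_adjoin (Set.mem_insert b S)⟩, Module.Finite.iff_fg.2 hR, rfl, ?_⟩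
  exact (Submodule.mem_smul_top_iff I (Subalgebra.toSubmodule R) _).2
    (hI _ ((Set.subset_insert b S).trans Algebra.subset_adjoin))

section FactorsThroughFree

variable {A N : Type*} [CommRing A] [AddCommGroup N] [Module A N]

lemma FactorsThroughFree.mem_ofList_smul_top {M : Type*} [AddCommGroup M] [Module A M]
    {f : M →ₗ[A] N} (hf : FactorsThroughFree f) {xs : List A} {y : A}
    (hA : IsWeaklyRegular A (xs ++ [y])) {m : M}
    (hm : y • m ∈ Ideal.ofList xs • (⊤ : Submodule A M)) :
    f m ∈ Ideal.ofList xs • (⊤ : Submodule A N) := by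
  obtain ⟨n, φ, ψ, rfl⟩ := hf
  have hreg := ((isWeaklyRegular_append_iff _ _ _).1
    (isWeaklyRegular_of_flat (M := Fin n → A) hA)).2
  rw [isWeaklyRegular_singleton_iff] at hreg
  refine Submodule.smul_top_le_comap_smul_top _ ψ
    (mem_of_isSMulRegular_quotient_of_smul_mem hreg ?_)
  rw [← map_smul]
  exact Submodule.smul_top_le_comap_smul_top _ φ hm

lemma exists_fg_factorsThroughFree_inclusion {R : Submodule A N} (hR : R.FG) {cs : List A}
    (h : ∀ c ∈ cs, FactorsThroughFree (c • R.subtype)) :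
    ∃ (R' : Submodule A N) (hle : R ≤ R'), R'.FG ∧
      ∀ c ∈ cs, FactorsThroughFree (c • Submodule.inclusion hle) := by
  induction cs with
  | nil => exact ⟨R, le_rfl, hR, by simp⟩
  | cons c cs ih =>
    obtain ⟨hc, hcs⟩ := List.forall_mem_cons.1 h
    obtain ⟨R', hle, hR', h'⟩ := ih hcs
    obtain ⟨n, φ, ψ, hφψ⟩ := hc
    refine ⟨R' ⊔ LinearMap.range ψ, hle.trans le_sup_left,
      hR'.sup (Module.Finite.iff_fg.1 inferInstance), List.forall_mem_cons.2 ⟨?_, fun d hd ↦ ?_⟩⟩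
    · refine ⟨n, φ, ψ.codRestrict _ fun v ↦ (le_sup_right : LinearMap.range ψ ≤ _) ⟨v, rfl⟩, ?_⟩
      ext m
      exact LinearMap.congr_fun hφψ m
    · obtain ⟨n', φ', ψ', hφψ'⟩ := h' d hd
      refine ⟨n', φ', Submodule.inclusion le_sup_left ∘ₗ ψ', ?_⟩
      rw [LinearMap.comp_assoc, hφψ']
      rfl

lemma exists_forall_factorsThroughFree_pow_smul {M : Type*} [AddCommGroup M] [Module A M]
    {f : M →ₗ[A] N} {xs : List A} (h : ∀ x ∈ xs, ∃ k, FactorsThroughFree (x ^ k • f)) :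
    ∃ k, ∀ n ≥ k, ∀ x ∈ xs, FactorsThroughFree (x ^ n • f) := by
  induction xs with
  | nil => exact ⟨0, by simp⟩
  | cons x xs ih =>
    obtain ⟨⟨k, hk⟩, hxs⟩ := List.forall_mem_cons.1 h
    obtain ⟨l, hl⟩ := ih hxs
    refine ⟨max k l, fun n hn ↦ List.forall_mem_cons.2 ⟨?_, hl n (le_of_max_le_right hn)⟩⟩
    rw [← Nat.sub_add_cancel (le_of_max_le_left hn), pow_add, mul_smul]
    exact hk.smul _

end FactorsThroughFree

variable {A B : Type*} [CommRing A] [CommRing B] [IsDomain B] [IsAbsolutelyIntegrallyClosed B]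
  [Algebra A B]

lemma mem_ofList_smul_top_of_pow_sub_sum_mem {p : ℕ} [Fact p.Prime] [CharP B p] {xs : List A}
    (hxs : xs ≠ []) {n E : ℕ} {a : Fin E → A} {b : B}
    (hb : b ^ p ^ (n + E) - ∑ i : Fin E,
        (a i * xs.prod ^ (p ^ (n + E) - p ^ (n + i : ℕ))) • b ^ p ^ (n + i : ℕ) ∈
      Ideal.ofList (xs.map (· ^ p ^ (n + E))) • (⊤ : Submodule A B)) :
    b ∈ Ideal.ofList xs • (⊤ : Submodule A B) := by
  have hlt (i : Fin E) : p ^ (n + i : ℕ) < p ^ (n + E) :=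
    Nat.pow_lt_pow_right (Fact.out : p.Prime).one_lt (by lia)
  obtain ⟨x, hx⟩ := List.exists_mem_of_ne_nil xs hxs
  rw [mem_ofList_smul_top_iff_mem_ofList_map] at hb ⊢
  refine mem_span_of_eval_scaleRoots_mem (s := algebraMap A B xs.prod)
    (monic_X_pow_sub_sum_C_mul_X_pow (fun i ↦ algebraMap A B (a i)) hlt)
    (isPPolynomial_X_pow_sub_sum_C_mul_X_pow n E _) ?_ ?_ ?_ ?_
  · rw [natDegree_X_pow_sub_sum_C_mul_X_pow _ hlt]
    exact pow_ne_zero _ (Fact.out : p.Prime).ne_zero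
  · intro z hz
    obtain ⟨x, hx, rfl⟩ := List.mem_map.1 hz
    exact map_dvd _ (List.dvd_prod hx)
  · exact Ideal.mem_of_dvd _ (map_dvd (algebraMap A B) (List.dvd_prod hx))
      (Ideal.subset_span (List.mem_map_of_mem hx))
  · rw [natDegree_X_pow_sub_sum_C_mul_X_pow _ hlt, scaleRoots_X_pow_sub_sum_C_mul_X_pow _ hlt]
    convert hb using 1
    · refine congrArg Ideal.span (Set.ext fun z ↦ ?_)
      simp
    · simp [Polynomial.eval_finsetSum, Algebra.smul_def]

variable [IsLocalRing A] [IsNoetherianRing A] [Algebra.IsIntegral A B]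

theorem mem_ofList_smul_top_of_smul_mem (p : ℕ) [Fact p.Prime] [CharP B p] {xs : List A} {y : A}
    (hne : xs ≠ [])
    (hxs : ∀ x ∈ xs, x ∈ maximalIdeal A) (hA : IsWeaklyRegular A (xs ++ [y]))
    (hB : IsWeaklyRegular B xs)
    (h : ∀ R : Submodule A B, R.FG → ∀ x ∈ xs, ∃ k, FactorsThroughFree (x ^ k • R.subtype))
    {b : B} (hb : y • b ∈ Ideal.ofList xs • (⊤ : Submodule A B)) :
    b ∈ Ideal.ofList xs • (⊤ : Submodule A B) := by
  have hp : p.Prime := Fact.out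
  obtain ⟨R, r, hRfin, rfl, hr⟩ := exists_subalgebra_finite_mem_smul_top hb
  have hR : (Subalgebra.toSubmodule R).FG := Module.Finite.iff_fg.1 hRfin
  have : CharP R p := (algebraMap R B).charP Subtype.val_injective p
  obtain ⟨n, hn⟩ := exists_forall_factorsThroughFree_pow_smul (h _ hR)
  obtain ⟨R', hle, hR', hinc⟩ := exists_fg_factorsThroughFree_inclusion hR
    (cs := xs.map (· ^ p ^ n)) fun c hc ↦ by
      obtain ⟨x, hx, rfl⟩ := List.mem_map.1 hc
      exact hn _ (Nat.lt_pow_self hp.one_lt).le x hx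
  have hAxs := ((isWeaklyRegular_append_iff A xs [y]).1 hA).1
  obtain ⟨C, _, _, α, β, _, hC, hαβ⟩ := factorsThroughRegular_subtype hxs hAxs hB
    (fun S hS x hx ↦ (h S hS x hx).imp fun k hk ↦ hk.factorsThroughRegular hAxs) hR'
  let w (e : ℕ) : C := α (Submodule.inclusion hle (r ^ p ^ (n + e)))
  have hw (e : ℕ) (x : A) (hx : x ∈ xs) :
      x ^ p ^ n • w e ∈ Ideal.ofList (xs.map (· ^ p ^ (n + e))) • (⊤ : Submodule A C) := by
    have hyr := pow_char_pow_mem_ofList_smul_top (p := p) (n + e) hr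
    rw [smul_pow] at hyr
    have hreg := isWeaklyRegular_map_pow hA (pow_ne_zero (n + e) hp.ne_zero)
    rw [List.map_append] at hreg
    have := (hinc _ (List.mem_map_of_mem hx)).mem_ofList_smul_top hreg hyr
    exact map_smul α (x ^ p ^ n) _ ▸ Submodule.smul_top_le_comap_smul_top _ α this
  obtain ⟨E, a, hE⟩ := exists_sub_sum_mem_ofList_map_pow_smul_top (q := fun e ↦ p ^ (n + e)) hxs hC
    (fun i j hij ↦ Nat.pow_le_pow_right hp.pos (by lia)) (pow_ne_zero _ hp.ne_zero) hw
  have hβw (e : ℕ) : β (w e) = (r : B) ^ p ^ (n + e) := LinearMap.congr_fun hαβ _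
  refine mem_ofList_smul_top_of_pow_sub_sum_mem (p := p) (n := n) hne (a := a) ?_
  simpa [hβw] using Submodule.smul_top_le_comap_smul_top _ β hE

theorem isWeaklyRegular_of_factorsThroughFree [FaithfulSMul A B] (p : ℕ) [Fact p.Prime] [CharP B p]
    {xs : List A} (hxs : ∀ x ∈ xs, x ∈ maximalIdeal A) (hA : IsWeaklyRegular A xs)
    (h : ∀ R : Submodule A B, R.FG → ∀ x ∈ xs, ∃ k, FactorsThroughFree (x ^ k • R.subtype)) :
    IsWeaklyRegular B xs := by
  induction xs using List.reverseRecOn with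
  | nil => exact .nil A B
  | append_singleton xs y ih =>
    have hxs' (x : A) (hx : x ∈ xs) : x ∈ maximalIdeal A := hxs x (List.mem_append_left _ hx)
    have hA' := (isWeaklyRegular_append_iff A xs [y]).1 hA
    have h' (R : Submodule A B) (hR : R.FG) (x : A) (hx : x ∈ xs) :=
      h R hR x (List.mem_append_left _ hx)
    have hB := ih hxs' hA'.1 h'
    obtain rfl | hne := eq_or_ne xs []
    · rw [List.nil_append, isWeaklyRegular_singleton_iff] at hA ⊢
      have := Module.IsTorsionFree.trans_faithfulSMul A B B
      exact (isLeftRegular_iff_isRegular.1 hA).isSMulRegular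
    · refine (isWeaklyRegular_append_iff B xs [y]).2 ⟨hB, (isWeaklyRegular_singleton_iff _ _).2 ?_⟩
      rw [isSMulRegular_quotient_iff_mem_of_smul_mem]
      exact fun b ↦ mem_ofList_smul_top_of_smul_mem p hne hxs' hA hB h'

end FrobeniusTrick

section FreeOverLocalRing

variable {A : Type*} [CommRing A] [IsLocalRing A]

lemma one_tmul_residueField_eq_zero_iff {N : Type*} [AddCommGroup N] [Module A N] (z : N) :
    (1 : ResidueField A) ⊗ₜ[A] z = 0 ↔ z ∈ maximalIdeal A • (⊤ : Submodule A N) := by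
  rw [← Submodule.Quotient.mk_eq_zero, ← TensorProduct.quotTensorEquivQuotSMul_mk_one_tmul]
  exact (LinearEquiv.map_eq_zero_iff _).symm

lemma free_of_exact_of_mem_maximalIdeal_smul_top {K F P : Type*} [AddCommGroup K]
    [AddCommGroup F] [AddCommGroup P] [Module A K] [Module A F] [Module A P] [Module.Finite A K]
    [Module.Finite A F] [Module.Free A F] {f : K →ₗ[A] F} {g : F →ₗ[A] P} (hfg : Exact f g)
    (hg : Surjective g) (h : ∀ x, f x ∈ maximalIdeal A • (⊤ : Submodule A F) →
      x ∈ maximalIdeal A • (⊤ : Submodule A K)) : Module.Free A P := by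
  refine Module.free_of_lTensor_residueField_injective f g hg hfg ?_
  rw [injective_iff_map_eq_zero]
  intro t ht
  obtain ⟨x, rfl⟩ := TensorProduct.mk_surjective A K (ResidueField A)
    Ideal.Quotient.mk_surjective t
  rw [TensorProduct.mk_apply, LinearMap.lTensor_tmul] at ht
  exact (one_tmul_residueField_eq_zero_iff x).2
    (h x ((one_tmul_residueField_eq_zero_iff (f x)).1 ht))

lemma mem_maximalIdeal_smul_top_of_smul_mem {K : Type*} [AddCommGroup K] [Module A K]
    [Module.Free A K] [Module.Finite A K] {I : Ideal A} {y : A} (hy : y ∉ I) {x : K}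
    (hx : y • x ∈ I • (⊤ : Submodule A K)) : x ∈ maximalIdeal A • (⊤ : Submodule A K) := by
  let b := Module.Free.chooseBasis A K
  rw [← b.sum_repr x]
  refine Submodule.sum_mem _ fun i _ ↦ Submodule.smul_mem_smul ?_ trivial
  have hi : y * b.repr x i ∈ I := by
    simpa using (Submodule.smul_top_le_comap_smul_top I (b.coord i)) hx
  rw [mem_maximalIdeal, mem_nonunits_iff]
  exact fun hu ↦ hy ((Ideal.mul_unit_mem_iff_mem I hu).1 hi)

lemma exists_isWeaklyRegular_forall_not_isSMulRegular (A : Type*) [CommRing A] [IsLocalRing A]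
    [IsNoetherianRing A] : ∃ xs : List A, (∀ x ∈ xs, x ∈ maximalIdeal A) ∧ IsWeaklyRegular A xs ∧
      ∀ r ∈ maximalIdeal A, ¬ IsSMulRegular (A ⧸ Ideal.ofList xs) r := by
  obtain ⟨_, ⟨xs, hxs, hA, rfl⟩, hmax⟩ := set_has_maximal_iff_noetherian.2 ‹IsNoetherianRing A›
    {I | ∃ xs : List A, (∀ x ∈ xs, x ∈ maximalIdeal A) ∧ IsWeaklyRegular A xs ∧ Ideal.ofList xs = I}
    ⟨_, [], by simp, .nil A A, rfl⟩
  refine ⟨xs, hxs, hA, fun r hr hreg ↦ hmax (Ideal.ofList (xs ++ [r]))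
    ⟨xs ++ [r], ?_, ?_, rfl⟩ ?_⟩
  · simpa [or_imp, forall_and] using ⟨hxs, hr⟩
  · rw [isWeaklyRegular_append_iff, isWeaklyRegular_singleton_iff, smul_eq_mul, Ideal.mul_top]
    exact ⟨hA, hreg⟩
  · rw [Ideal.ofList_append, Ideal.ofList_singleton, left_lt_sup, Ideal.span_singleton_le_iff_mem]
    intro hr'
    have h1 : (1 : A ⧸ Ideal.ofList xs) = 0 := hreg.right_eq_zero_of_smul <| by
      rw [Algebra.smul_def, mul_one]
      exact Ideal.Quotient.eq_zero_iff_mem.2 hr'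
    have hle : Ideal.ofList xs ≤ maximalIdeal A := Ideal.span_le.2 hxs
    exact (maximalIdeal.isMaximal A).ne_top <| (Ideal.eq_top_iff_one _).2 <| hle <|
      Ideal.Quotient.eq_zero_iff_mem.1 h1

lemma exists_notMem_forall_mul_mem [IsNoetherianRing A] {I : Ideal A}
    (hI : ∀ r ∈ maximalIdeal A, ¬ IsSMulRegular (A ⧸ I) r) :
    ∃ y ∉ I, ∀ a ∈ maximalIdeal A, y * a ∈ I := by
  have hne : Nontrivial ((A ⧸ maximalIdeal A) →ₗ[A] (A ⧸ I)) := by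
    rw [← not_subsingleton_iff_nontrivial, IsSMulRegular.subsingleton_linearMap_iff,
      Ideal.annihilator_quotient]
    exact fun ⟨r, hr, hreg⟩ ↦ hI r hr hreg
  obtain ⟨g, hg⟩ := exists_ne (0 : (A ⧸ maximalIdeal A) →ₗ[A] (A ⧸ I))
  obtain ⟨y, hy⟩ := Ideal.Quotient.mk_surjective (g 1)
  have hmul (a : A) : Ideal.Quotient.mk I (y * a) = g (Ideal.Quotient.mk _ a) := by
    have ha : Ideal.Quotient.mk (maximalIdeal A) a = a • 1 := by
      rw [Algebra.smul_def, mul_one]; rfl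
    rw [ha, map_smul, ← hy, mul_comm, map_mul, Algebra.smul_def]; rfl
  refine ⟨y, fun hy' ↦ hg ?_, fun a ha ↦ ?_⟩
  · ext
    simpa [Ideal.Quotient.eq_zero_iff_mem.2 hy'] using hy.symm
  · rw [← Ideal.Quotient.eq_zero_iff_mem, hmul, Ideal.Quotient.eq_zero_iff_mem.2 ha, map_zero]

end FreeOverLocalRing

section ProjectiveDimension

open CategoryTheory

universe u v

lemma hasProjectiveDimensionLE_succ_iff_ker {A : Type u} [CommRing A] {P M : Type u}
    [AddCommGroup P] [AddCommGroup M] [Module A P] [Module A M] [Module.Projective A P]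
    {f : P →ₗ[A] M} (hf : Surjective f) {n : ℕ} :
    HasProjectiveDimensionLE (ModuleCat.of A M) (n + 1) ↔
      HasProjectiveDimensionLE (ModuleCat.of A (LinearMap.ker f)) n :=
  (LinearMap.shortExact_shortComplexKer hf).hasProjectiveDimensionLT_X₃_iff n
    (inferInstanceAs (Projective (ModuleCat.of A P)))

lemma hasProjectiveDimensionLE_zero_iff {A : Type u} [CommRing A] {M : Type u} [AddCommGroup M]
    [Module A M] : HasProjectiveDimensionLE (ModuleCat.of A M) 0 ↔ Module.Projective A M := by
  rw [← projective_iff_hasProjectiveDimensionLE_zero, ← IsProjective.iff_projective]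

theorem free_of_hasProjectiveDimensionLE {A : Type u} [CommRing A] [IsLocalRing A]
    [IsNoetherianRing A] {xs : List A} (hA : IsWeaklyRegular A xs) {y : A}
    (hy : y ∉ Ideal.ofList xs) (hm : ∀ a ∈ maximalIdeal A, y * a ∈ Ideal.ofList xs) (n : ℕ)
    {M : Type u} [AddCommGroup M] [Module A M] [Module.Finite A M] (hM : IsWeaklyRegular M xs)
    (hn : HasProjectiveDimensionLE (ModuleCat.of A M) n) : Module.Free A M := by
  induction n generalizing M with
  | zero =>
    have := hasProjectiveDimensionLE_zero_iff.1 hn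
    exact Module.free_of_flat_of_isLocalRing
  | succ n ih =>
    obtain ⟨k, f, hf⟩ := Module.Finite.exists_fin' A M
    have hinj := (LinearMap.ker f).subtype_injective
    have hexact : Exact (LinearMap.ker f).subtype f := LinearMap.exact_subtype_ker_map f
    have : Module.Free A (LinearMap.ker f) :=
      ih (isWeaklyRegular_left_of_exact hinj hexact hf (isWeaklyRegular_of_flat hA) hM)
        ((hasProjectiveDimensionLE_succ_iff_ker hf).1 hn)
    refine free_of_exact_of_mem_maximalIdeal_smul_top hexact hf fun x hx ↦
      mem_maximalIdeal_smul_top_of_smul_mem hy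
        (mem_ofList_smul_top_of_exact hinj hexact hf hM ?_)
    rw [map_smul]
    refine Submodule.smul_mono_left (Ideal.span_singleton_mul_le_iff.2 hm) ?_
    rw [Submodule.mul_smul]
    exact Submodule.smul_mem_smul (Ideal.mem_span_singleton_self y) hx

/-- A ring is homologically regular if all its finitely generated modules have finite projective
dimension. For Noetherian local rings this is equivalent to regularity, by the theorem of
Auslander-Buchsbaum and Serre. -/
def IsHomologicallyRegular (A : Type u) [CommRing A] : Prop :=
  ∀ (M : Type u) [AddCommGroup M] [Module A M] [Module.Finite A M],
    ∃ n, HasProjectiveDimensionLE (ModuleCat.of A M) n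

lemma flat_of_forall_factorsThroughFree {A : Type u} [CommRing A] {N : Type*} [AddCommGroup N]
    [Module A N] (h : ∀ R : Submodule A N, R.FG → FactorsThroughFree R.subtype) :
    Module.Flat A N := by
  refine Module.Flat.of_forall_exists_factorization fun {l f x} hx ↦ ?_
  obtain ⟨n, φ, ψ, hφψ⟩ := h (LinearMap.range x) (Module.Finite.iff_fg.1 inferInstance)
  let e := Finsupp.linearEquivFunOnFinite A A (Fin n)
  have hf : x.rangeRestrict f = 0 := Subtype.ext hx
  refine ⟨n, e.symm ∘ₗ φ ∘ₗ x.rangeRestrict, ψ ∘ₗ e, LinearMap.ext fun v ↦ ?_, by simp [hf]⟩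
  simpa using (LinearMap.congr_fun hφψ (x.rangeRestrict v)).symm

lemma factorsThroughFree_of_comp_eq {A : Type u} [CommRing A] {M N C : Type*} [AddCommGroup M]
    [AddCommGroup N] [AddCommGroup C] [Module A M] [Module A N] [Module A C] [Module.Projective A C]
    [Module.Finite A C] {f : M →ₗ[A] N} {φ : M →ₗ[A] C} {ψ : C →ₗ[A] N} (h : ψ ∘ₗ φ = f) :
    FactorsThroughFree f := by
  obtain ⟨n, π, s, -, -, hπs⟩ := Module.Finite.exists_comp_eq_id_of_projective A C
  refine ⟨n, s ∘ₗ φ, ψ ∘ₗ π, ?_⟩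
  rw [LinearMap.comp_assoc, ← LinearMap.comp_assoc φ, hπs, LinearMap.id_comp, h]

theorem flat_of_factorsThroughFree_pow_smul {A : Type u} {B : Type v} [CommRing A] [CommRing B]
    [IsDomain B] [IsAbsolutelyIntegrallyClosed B] [Algebra A B] [FaithfulSMul A B] [IsLocalRing A]
    [IsNoetherianRing A] [Algebra.IsIntegral A B] (p : ℕ) [Fact p.Prime] [CharP B p]
    (hA : IsHomologicallyRegular A) (h : ∀ R : Submodule A B, R.FG → ∀ x ∈ maximalIdeal A,
      ∃ k, FactorsThroughFree (x ^ k • R.subtype)) : Module.Flat A B := by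
  obtain ⟨xs, hxs, hAxs, hreg⟩ := exists_isWeaklyRegular_forall_not_isSMulRegular A
  obtain ⟨y, hy, hm⟩ := exists_notMem_forall_mul_mem hreg
  have h' (R : Submodule A B) (hR : R.FG) (x : A) (hx : x ∈ xs) := h R hR x (hxs x hx)
  have hB := isWeaklyRegular_of_factorsThroughFree p hxs hAxs h'
  refine flat_of_forall_factorsThroughFree fun R hR ↦ ?_
  obtain ⟨C, _, _, φ, ψ, _, hC, hφψ⟩ := factorsThroughRegular_subtype hxs hAxs hB
    (fun S hS x hx ↦ (h' S hS x hx).imp fun k hk ↦ hk.factorsThroughRegular hAxs) hR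
  obtain ⟨n, hn⟩ := hA C
  have := free_of_hasProjectiveDimensionLE hAxs hy hm n hC hn
  exact factorsThroughFree_of_comp_eq hφψ

end ProjectiveDimension

section Localization

universe u v

section Module

variable {A : Type u} [CommRing A] {M N : Type*} [AddCommGroup M] [AddCommGroup N] [Module A M]
  [Module A N]

lemma exists_mem_factorsThroughFree_smul (S : Submonoid A) {N' : Type*} [AddCommGroup N']
    [Module A N'] [Module.Flat A N'] [Module.FinitePresentation A M] (g : N →ₗ[A] N')
    [IsLocalizedModule S g] (f : M →ₗ[A] N) : ∃ s ∈ S, FactorsThroughFree (s • f) := by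
  obtain ⟨k, φ, ψ, hφψ⟩ := Module.Flat.exists_factorization_of_finitePresentation (g ∘ₗ f)
  obtain ⟨θ, s, hθ⟩ := Module.FinitePresentation.exists_lift_of_isLocalizedModule S g ψ
  obtain ⟨t, ht⟩ := Module.Finite.exists_smul_of_comp_eq_of_isLocalizedModule S g (θ ∘ₗ φ) (s • f)
    (by rw [← LinearMap.comp_assoc, hθ, LinearMap.smul_comp, LinearMap.comp_smul, hφψ])
  refine ⟨(t * s : S), (t * s).2, factorsThroughFree_of_comp_eq (φ := φ) (ψ := t • θ) ?_⟩
  rw [LinearMap.smul_comp, ht, smul_smul]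
  rfl

/-- The ideal of all `c` such that `c • f` factors through a free module of finite rank. -/
def freeFactorizationIdeal (f : M →ₗ[A] N) : Ideal A where
  carrier := {c | FactorsThroughFree (c • f)}
  add_mem' := by
    rintro c d ⟨n, φ, ψ, h⟩ ⟨m, φ', ψ', h'⟩
    refine factorsThroughFree_of_comp_eq (φ := φ.prod φ') (ψ := ψ.coprod ψ') ?_
    rw [LinearMap.coprod_comp_prod, h, h', add_smul]
  zero_mem' := ⟨0, 0, 0, by simp⟩
  smul_mem' a c h := by
    rw [smul_eq_mul, Set.mem_ofPred_eq, mul_smul]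
    exact h.smul a

lemma exists_pow_smul_factorsThroughFree {f : M →ₗ[A] N} {y : A}
    (h : ∀ Q : Ideal A, Q.IsPrime → y ∉ Q → ∃ s ∉ Q, FactorsThroughFree (s • f)) :
    ∃ k, FactorsThroughFree (y ^ k • f) := by
  suffices y ∈ (freeFactorizationIdeal f).radical from this
  rw [Ideal.radical_eq_sInf, Ideal.mem_sInf]
  rintro Q ⟨hfQ, hQ⟩
  by_contra hy
  obtain ⟨s, hs, hsf⟩ := h Q hQ hy
  exact hs (hfQ hsf)

lemma isLocalizedModule_subtype_span (S : Submonoid A) (A' : Type*) [CommRing A'] [Algebra A A']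
    [IsLocalization S A'] [Module A' M] [IsScalarTower A A' M] {t : Set M}
    (ht : Submodule.span A' t = ⊤) : IsLocalizedModule S (Submodule.span A t).subtype where
  map_units x := by
    simpa using (IsLocalization.map_units A' x).map (Algebra.lsmul A A M)
  surj y := by
    obtain ⟨s, hs⟩ := multiple_mem_span_of_mem_localization_span S A' t y (ht ▸ trivial)
    exact ⟨⟨⟨_, hs⟩, s⟩, rfl⟩
  exists_of_eq h := ⟨1, by rw [Subtype.ext h]⟩

end Module

lemma IsHomologicallyRegular.localization {A : Type u} [CommRing A] (hA : IsHomologicallyRegular A)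
    (S : Submonoid A) : IsHomologicallyRegular (Localization S) := by
  intro M _ _ _
  let := Module.compHom M (algebraMap A (Localization S))
  have : IsScalarTower A (Localization S) M := .of_algebraMap_smul fun _ _ ↦ rfl
  obtain ⟨t, ht⟩ := Module.Finite.fg_top (R := Localization S) (M := M)
  have := isLocalizedModule_subtype_span S (Localization S) ht
  have : Module.Finite A (Submodule.span A (t : Set M)) := .span_of_finite A t.finite_toSet
  obtain ⟨n, hn⟩ := hA (Submodule.span A (t : Set M))
  let N : ModuleCat A := .of A (Submodule.span A (t : Set M))
  have := ModuleCat.localizedModule_hasProjectiveDimensionLE n S N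
  have := N.localizedModule_isLocalizedModule S
  let e := (IsLocalizedModule.linearEquiv S (M := N) (N.localizedModuleMkLinearMap S)
    (Submodule.span A (t : Set M)).subtype).extendScalarsOfIsLocalization S (Localization S)
  exact ⟨n, ModuleCat.hasProjectiveDimensionLE_of_linearEquiv e n⟩

lemma height_maximalIdeal_localization_atPrime {A : Type*} [CommRing A] (Q : Ideal A) [Q.IsPrime] :
    (maximalIdeal (Localization.AtPrime Q)).height = Q.height := by
  rw [← WithBot.coe_inj, maximalIdeal_height_eq_ringKrullDim,
    IsLocalization.AtPrime.ringKrullDim_eq_height Q]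

theorem flat_of_isHomologicallyRegular {A : Type u} {B : Type v} [CommRing A] [IsLocalRing A]
    [IsNoetherianRing A] [CommRing B] [IsDomain B] [IsAbsolutelyIntegrallyClosed B] [Algebra A B]
    [FaithfulSMul A B] [Algebra.IsIntegral A B] (p : ℕ) [Fact p.Prime] [CharP B p]
    (hA : IsHomologicallyRegular A) : Module.Flat A B := by
  obtain ⟨n, hn⟩ : ∃ n : ℕ, (maximalIdeal A).height < n :=
    ENat.exists_nat_gt Ideal.height_ne_top_of_isPrime
  induction n generalizing A B with
  | zero => simp at hn
  | succ n ih =>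
    refine flat_of_factorsThroughFree_pow_smul p hA fun R hR y hy ↦
      exists_pow_smul_factorsThroughFree fun Q hQ hyQ ↦ ?_
    have hlt : Q < maximalIdeal A :=
      lt_of_le_of_ne (le_maximalIdeal hQ.ne_top) fun h ↦ hyQ (h ▸ hy)
    let A' := Localization.AtPrime Q
    have : IsDomain A := (FaithfulSMul.algebraMap_injective A B).isDomain
    let B' := Localization (Algebra.algebraMapSubmonoid B Q.primeCompl)
    have hle : Algebra.algebraMapSubmonoid B Q.primeCompl ≤ nonZeroDivisors B :=
      algebraMapSubmonoid_le_nonZeroDivisors_of_faithfulSMul B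
        Q.primeCompl_le_nonZeroDivisors
    have : IsDomain B' := IsLocalization.isDomain_localization hle
    have := isAbsolutelyIntegrallyClosed_of_isLocalization B'
      (Algebra.algebraMapSubmonoid B Q.primeCompl)
    have : FaithfulSMul A' B' := (faithfulSMul_iff_algebraMap_injective A' B').2
      (localizationAlgebra_injective A' B' (FaithfulSMul.algebraMap_injective A B))
    have : Algebra.IsIntegral A' B' := ⟨isIntegral_localization⟩
    have : CharP B' p := charP_of_injective_algebraMap (IsLocalization.injective B' hle) p
    have hheight : (maximalIdeal A').height < n := by
      rw [height_maximalIdeal_localization_atPrime]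
      refine (Ideal.height_strict_mono_of_isPrime_of_isPrime hlt).trans_le ?_
      exact Order.le_of_lt_add_one (by simpa using hn)
    have : Module.Flat A' B' := ih (hA.localization Q.primeCompl) hheight
    have : Module.Flat A B' := Module.Flat.trans A A' B'
    have := Module.Finite.iff_fg.2 hR
    have : Module.FinitePresentation A R := Module.finitePresentation_of_finite A R
    exact exists_mem_factorsThroughFree_smul Q.primeCompl
      (IsScalarTower.toAlgHom A B B').toLinearMap R.subtype

end Localization

section RegularLocalRing

universe u v

variable {A : Type u} [CommRing A] [IsLocalRing A] [IsNoetherianRing A]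

lemma hasProjectiveDimensionLE_of_isWeaklyRegular {rs xs : List A}
    (hA : IsWeaklyRegular A (rs ++ xs)) (hm : Ideal.ofList (rs ++ xs) = maximalIdeal A)
    {M : Type u} [AddCommGroup M] [Module A M] [Module.Finite A M] (hM : IsWeaklyRegular M rs) :
    CategoryTheory.HasProjectiveDimensionLE (ModuleCat.of A M) xs.length := by
  induction xs generalizing rs M with
  | nil =>
    rw [List.append_nil] at hm
    obtain ⟨k, f, hf⟩ := Module.Finite.exists_fin' A M
    have : Module.Free A M :=
      free_of_exact_of_mem_maximalIdeal_smul_top (LinearMap.exact_subtype_ker_map f) hf <| hm ▸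
        fun _ ↦ mem_ofList_smul_top_of_exact (LinearMap.ker f).subtype_injective
          (LinearMap.exact_subtype_ker_map f) hf hM
    exact hasProjectiveDimensionLE_zero_iff.2 inferInstance
  | cons x xs ih =>
    obtain ⟨k, f, hf⟩ := Module.Finite.exists_fin' A M
    rw [List.append_cons] at hA hm
    refine (hasProjectiveDimensionLE_succ_iff_ker hf).2 (ih hA hm ?_)
    exact isWeaklyRegular_left_concat_of_exact (LinearMap.ker f).subtype_injective
      (LinearMap.exact_subtype_ker_map f) hf
      (isWeaklyRegular_of_flat ((isWeaklyRegular_append_iff _ _ _).1 hA).1) hM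

lemma isHomologicallyRegular_of_isWeaklyRegular {zs : List A} (hzs : IsWeaklyRegular A zs)
    (hm : Ideal.ofList zs = maximalIdeal A) : IsHomologicallyRegular A := fun M _ _ _ ↦
  ⟨_, hasProjectiveDimensionLE_of_isWeaklyRegular (rs := []) hzs hm (.nil A M)⟩

theorem isRegular_map_algebraMap_of_isAbsolutelyIntegrallyClosed {B : Type v} [CommRing B]
    [IsDomain B] [IsAbsolutelyIntegrallyClosed B] [Algebra A B] [FaithfulSMul A B]
    [Algebra.IsIntegral A B] (p : ℕ) [Fact p.Prime] [CharP B p] {zs : List A}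
    (hzs : IsWeaklyRegular A zs) (hm : Ideal.ofList zs = maximalIdeal A) :
    IsRegular B (zs.map (algebraMap A B)) := by
  have : Module.Flat A B :=
    flat_of_isHomologicallyRegular p (isHomologicallyRegular_of_isWeaklyRegular hzs hm)
  have hmem (z : A) (hz : z ∈ zs) : z ∈ maximalIdeal A := hm ▸ Ideal.subset_span hz
  exact ((isRegular_iff_isWeaklyRegular_of_subset_maximalIdeal hmem).2 hzs).of_faithfullyFlat

end RegularLocalRing

section MvPowerSeries

open MvPowerSeries

variable {σ k : Type*}

instance charP_mvPowerSeries [CommRing k] (p : ℕ) [CharP k p] : CharP (MvPowerSeries σ k) p :=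
  charP_of_injective_ringHom C_injective p

lemma coeff_single_add_X_mul [Semiring k] (s : σ) (n : σ →₀ ℕ) (f : MvPowerSeries σ k) :
    coeff (Finsupp.single s 1 + n) (X s * f) = coeff n f := by
  rw [X, coeff_add_monomial_mul, one_mul]

lemma mem_ofList_map_X_iff [CommRing k] {l : List σ} {f : MvPowerSeries σ k} :
    f ∈ Ideal.ofList (l.map (X (R := k))) ↔
      ∀ n : σ →₀ ℕ, (∀ i ∈ l, n i = 0) → coeff n f = 0 := by
  induction l generalizing f with
  | nil => simp [MvPowerSeries.ext_iff]
  | cons s l ih =>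
    have hcons := mem_ofList_cons_smul_top_iff (x := X s) (xs := l.map (X (R := k)))
      (m := f)
    simp only [smul_eq_mul, Ideal.mul_top, ih, map_sub, sub_eq_zero] at hcons
    rw [List.map_cons, hcons]
    constructor
    · rintro ⟨b, hb⟩ n hn
      rw [hb n fun i hi ↦ hn i (List.mem_cons_of_mem s hi)]
      exact X_dvd_iff.1 (dvd_mul_right _ b) n (hn s List.mem_cons_self)
    · intro h
      let b : MvPowerSeries σ k := fun n ↦ coeff (Finsupp.single s 1 + n) f
      refine ⟨b, fun n hn ↦ ?_⟩
      by_cases hs : n s = 0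
      · rw [h n (List.forall_mem_cons.2 ⟨hs, hn⟩), X_dvd_iff.1 (dvd_mul_right _ _) n hs]
      · obtain ⟨m, rfl⟩ := exists_add_of_le
          (Finsupp.single_le_iff.2 (Nat.one_le_iff_ne_zero.2 hs))
        rw [coeff_single_add_X_mul]
        rfl

lemma isWeaklyRegular_map_X [CommRing k] {l : List σ} (hl : l.Nodup) :
    IsWeaklyRegular (MvPowerSeries σ k) (l.map (X (R := k))) := by
  induction l using List.reverseRecOn with
  | nil => exact .nil _ _
  | append_singleton l s ih =>
    obtain ⟨hl, -, hs⟩ := List.nodup_append.1 hl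
    rw [List.map_append, isWeaklyRegular_append_iff, List.map_singleton,
      isWeaklyRegular_singleton_iff, isSMulRegular_quotient_iff_mem_of_smul_mem, smul_eq_mul,
      Ideal.mul_top]
    refine ⟨ih hl, fun f hf ↦ mem_ofList_map_X_iff.2 fun n hn ↦ ?_⟩
    rw [← coeff_single_add_X_mul s]
    refine mem_ofList_map_X_iff.1 hf _ fun i hi ↦ ?_
    simp [hn i hi, (hs i hi s List.mem_cons_self).symm]

lemma ofList_map_X_eq_maximalIdeal [Field k] {l : List σ} (hl : ∀ s, s ∈ l) :
    Ideal.ofList (l.map X) = maximalIdeal (MvPowerSeries σ k) := by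
  ext f
  rw [mem_ofList_map_X_iff, mem_maximalIdeal, mem_nonunits_iff,
    MvPowerSeries.isUnit_iff_constantCoeff, isUnit_iff_ne_zero, not_not]
  refine ⟨fun h ↦ h 0 fun _ _ ↦ rfl, fun h n hn ↦ ?_⟩
  obtain rfl : n = 0 := Finsupp.ext fun i ↦ hn i (hl i)
  exact h

end MvPowerSeries

section WittVector

variable (p : ℕ) [Fact p.Prime] (B : Type*) [CommRing B] [CharP B p]

lemma perfectRing_of_isAbsolutelyIntegrallyClosed [IsDomain B] [IsAbsolutelyIntegrallyClosed B] :
    PerfectRing B p := by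
  have hp : p ≠ 0 := (Fact.out : p.Prime).ne_zero
  refine .ofSurjective B p fun b ↦ ?_
  obtain ⟨x, hx⟩ := exists_eval_eq_of_monic (Polynomial.monic_X_pow p)
    (by rwa [Polynomial.natDegree_X_pow]) b
  exact ⟨x, by simpa [frobenius_def] using hx⟩

lemma isSMulRegular_natCast_wittVector [PerfectRing B p] :
    IsSMulRegular (WittVector p B) (p : WittVector p B) :=
  .of_right_eq_zero_of_smul fun x hx ↦
    WittVector.eq_zero_of_p_mul_eq_zero x (by rwa [mul_comm])

theorem isRegular_p_cons_map_teichmuller [PerfectRing B p] {bs : List B} (h : IsRegular B bs) :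
    IsRegular (WittVector p B)
      ((p : WittVector p B) :: bs.map (WittVector.teichmuller p)) := by
  refine (isRegular_cons_iff _ _ _).2 ⟨isSMulRegular_natCast_wittVector p B, ?_⟩
  have hspan : (p : WittVector p B) • (⊤ : Submodule (WittVector p B) (WittVector p B)) =
      Ideal.span {(p : WittVector p B)} := by
    rw [← Submodule.ideal_span_singleton_smul, smul_eq_mul, Ideal.mul_top]
  let e : QuotSMulTop (p : WittVector p B) (WittVector p B) ≃+ B :=
    (Submodule.quotEquivOfEq _ _ hspan).toAddEquiv.trans WittVector.quotientPEquiv.toAddEquiv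
  refine (AddEquiv.isRegular_congr (e := e) ?_).2 h
  refine List.forall₂_map_left_iff.2 (List.forall₂_same.2 fun b _ x ↦ ?_)
  obtain ⟨x, rfl⟩ := Submodule.Quotient.mk_surjective _ x
  exact map_mul WittVector.constantCoeff (WittVector.teichmuller p b) x

end WittVector

instance faithfulSMul_algebraicClosure_fractionRing (A : Type*) [CommRing A] [IsDomain A] :
    FaithfulSMul A (AlgebraicClosure (FractionRing A)) :=
  .trans A (FractionRing A) _

theorem witt_of_absolute_integral_closure_regular_sequence_general {A B : Type*} [CommRing A]
    [IsLocalRing A] [IsNoetherianRing A] [CommRing B] [IsDomain B]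
    [IsAbsolutelyIntegrallyClosed B] [Algebra A B] [FaithfulSMul A B] [Algebra.IsIntegral A B]
    (p : ℕ) [Fact p.Prime] [CharP A p] {zs : List A} (hzs : IsWeaklyRegular A zs)
    (hm : Ideal.ofList zs = maximalIdeal A) :
    IsRegular (WittVector p B) ((p : WittVector p B) ::
      zs.map fun z ↦ WittVector.teichmuller p (algebraMap A B z)) := by
  have : CharP B p := charP_of_injective_algebraMap (FaithfulSMul.algebraMap_injective A B) p
  have : PerfectRing B p := perfectRing_of_isAbsolutelyIntegrallyClosed p B
  rw [← Function.comp_def, ← List.map_map]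
  exact isRegular_p_cons_map_teichmuller p B
    (isRegular_map_algebraMap_of_isAbsolutelyIntegrallyClosed p hzs hm)

/-- Let `k` be a perfect field of characteristic `p`, `A = k[[z₁, …, z_d]]`
(`d ≥ 1`) and `A⁺` the absolute integral closure of `A` (the integral closure of `A` in an
algebraic closure of its fraction field). Then `(p, [z₁], …, [z_d])` is a regular sequence on
`𝕎(A⁺)`, where `[zᵢ]` is the Teichmüller lift of the image of `zᵢ` in `A⁺`. -/
theorem witt_of_absolute_integral_closure_regular_sequence
    (p : ℕ) [Fact p.Prime] (k : Type*) [Field k] [CharP k p] [PerfectRing k p]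
    (d : ℕ) (hd : 1 ≤ d) :
    RingTheory.Sequence.IsRegular
      (WittVector p
        ↥(integralClosure (MvPowerSeries (Fin d) k)
            (AlgebraicClosure (FractionRing (MvPowerSeries (Fin d) k)))))
      ((p : WittVector p
        ↥(integralClosure (MvPowerSeries (Fin d) k)
            (AlgebraicClosure (FractionRing (MvPowerSeries (Fin d) k))))) ::
        List.ofFn fun i : Fin d =>
          WittVector.teichmuller p
            (algebraMap (MvPowerSeries (Fin d) k)
              ↥(integralClosure (MvPowerSeries (Fin d) k)
                  (AlgebraicClosure (FractionRing (MvPowerSeries (Fin d) k))))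
              (MvPowerSeries.X i))) := by
  simpa only [List.map_map, List.ofFn_eq_map, Function.comp_def] using
    witt_of_absolute_integral_closure_regular_sequence_general p
      (isWeaklyRegular_map_X (List.nodup_finRange d))
      (ofList_map_X_eq_maximalIdeal List.mem_finRange)

end
end
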